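/- arXiv:2210.12405 — 5 statements merged into one kernel-verified Lean document; each statement's English description precedes it below -/
import Mathlib

section
/- Let M(d,2) denote the number of equivalence classes of d-dimensional extremal (0,1)-matrices of order 2. Then log₂ M(d,2) = d²(1 + o(1)) as d → ∞; that is, (log₂ M(d,2))/d² tends to 1 as d tends to infinity. -/
open Finset

/-- The sum of the entries of `k` over the hyperplane `Γ_{i,j}`. -/
def hypSum {d n : ℕ} (k : (Fin d → Fin n) → ℝ) (i : Fin d) (j : Fin n) : ℝ :=
  ∑ α ∈ Finset.univ.filter (fun α : Fin d → Fin n => α i = j), k α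

/-- `k` is a polyplex of weight `W` in the `d`-dimensional (0,1)-matrix `A` of order `n`. -/
def IsPolyplex {d n : ℕ} (A : (Fin d → Fin n) → Bool) (k : (Fin d → Fin n) → ℝ) (W : ℝ) : Prop :=
  (∀ α, 0 ≤ k α) ∧ (∀ α, A α = false → k α = 0) ∧
  (∀ i j, hypSum k i j ≤ 1) ∧ (∑ α, k α) = W

/-- `k` is a polydiagonal in `A`: a nonnegative weighting of the support whose sum over
every hyperplane equals `1`. -/
def IsPolydiagonal {d n : ℕ} (A : (Fin d → Fin n) → Bool) (k : (Fin d → Fin n) → ℝ) : Prop :=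
  (∀ α, 0 ≤ k α) ∧ (∀ α, A α = false → k α = 0) ∧ (∀ i j, hypSum k i j = 1)

def HasPolydiagonal {d n : ℕ} (A : (Fin d → Fin n) → Bool) : Prop :=
  ∃ k, IsPolydiagonal A k

/-- The matrix obtained from `A` by additionally setting the entry at `β` to `1`. -/
def addEntry {d n : ℕ} (A : (Fin d → Fin n) → Bool) (β : Fin d → Fin n) :
    (Fin d → Fin n) → Bool :=
  fun α => if α = β then true else A α

/-- `A` is extremal: it has no polydiagonal, and adding any entry creates one. -/
def IsExtremal {d n : ℕ} (A : (Fin d → Fin n) → Bool) : Prop :=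
  ¬ HasPolydiagonal A ∧ ∀ β, A β = false → HasPolydiagonal (addEntry A β)

/-- `Λ` is a hyperplane cover of `A`. -/
def IsCover {d n : ℕ} (A : (Fin d → Fin n) → Bool) (Λ : Fin d → Fin n → ℝ) : Prop :=
  (∀ i j, 0 ≤ Λ i j) ∧ ∀ α, A α = true → 1 ≤ ∑ i, Λ i (α i)

/-- The weight of a hyperplane cover. -/
def coverWeight {d n : ℕ} (Λ : Fin d → Fin n → ℝ) : ℝ := ∑ i, ∑ j, Λ i j

/-- `Λ` is an optimal hyperplane cover of `A`: a cover of minimum weight. -/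
def IsOptimalCover {d n : ℕ} (A : (Fin d → Fin n) → Bool) (Λ : Fin d → Fin n → ℝ) : Prop :=
  IsCover A Λ ∧ ∀ Λ', IsCover A Λ' → coverWeight Λ ≤ coverWeight Λ'

/-- `A` is a threshold matrix. -/
def IsThreshold {d n : ℕ} (A : (Fin d → Fin n) → Bool) : Prop :=
  ∃ Λ : Fin d → Fin n → ℝ, (∀ i j, 0 ≤ Λ i j) ∧
    ∀ α, (A α = true ↔ 1 ≤ ∑ i, Λ i (α i))

/-- `A` and `B` are equivalent: `B` is obtained from `A` by permuting directions and
permuting parallel hyperplanes, i.e. `B(α) = A(β)` where `β (π i) = σ i (α i)`. -/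
def MatEquiv {d n : ℕ} (A B : (Fin d → Fin n) → Bool) : Prop :=
  ∃ (π : Equiv.Perm (Fin d)) (σ : Fin d → Equiv.Perm (Fin n)),
    ∀ α, B α = A (fun j => σ (π.symm j) (α (π.symm j)))

/-- The rate of the hyperplane `Γ_{i,j}` of `A`: the number of ones it contains. -/
def rate {d n : ℕ} (A : (Fin d → Fin n) → Bool) (i : Fin d) (j : Fin n) : ℕ :=
  (Finset.univ.filter (fun α : Fin d → Fin n => A α = true ∧ α i = j)).card

/-- The profile of `A`: the multiset of the rates of all its `d·n` hyperplanes. -/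
def profile {d n : ℕ} (A : (Fin d → Fin n) → Bool) : Multiset ℕ :=
  (Finset.univ : Finset (Fin d × Fin n)).val.map (fun p => rate A p.1 p.2)


/-- The number of equivalence classes of d-dimensional extremal matrices of order 2. -/
noncomputable def M (d : ℕ) : ℕ :=
  Nat.card (Quot (fun A B : {A : (Fin d → Fin 2) → Bool // IsExtremal A} =>
    MatEquiv A.1 B.1))


/-- The sign `±1` attached to a bit. -/
noncomputable def sg (a : Fin 2) : ℝ := if a = 0 then -1 else 1

/-- The linear form with coefficients `w` evaluated at the `±1` point `α`. -/
noncomputable def dotS {d : ℕ} (w : Fin d → ℝ) (α : Fin d → Fin 2) : ℝ := ∑ i, w i * sg (α i)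

/-- Flip a bit. -/
def flipB (a : Fin 2) : Fin 2 := if a = 0 then 1 else 0

lemma sg_flipB (a : Fin 2) : sg (flipB a) = - sg a := by
  fin_cases a <;> simp [sg, flipB]

lemma flipB_ne (a : Fin 2) : flipB a ≠ a := by
  fin_cases a <;> simp [flipB]

lemma sg_ne_zero (a : Fin 2) : sg a ≠ 0 := by
  unfold sg; split_ifs <;> norm_num

lemma sg_inj {a b : Fin 2} (h : sg a = sg b) : a = b := by
  revert h
  fin_cases a <;> fin_cases b <;> simp [sg] <;> norm_num

lemma sg_cases (a : Fin 2) : sg a = 1 ∨ sg a = -1 := by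
  fin_cases a <;> simp [sg]

lemma dotS_flip {d : ℕ} (w : Fin d → ℝ) (α : Fin d → Fin 2) :
    dotS w (fun i => flipB (α i)) = - dotS w α := by
  simp [dotS, sg_flipB]

lemma hypSum_diff {d : ℕ} (k : (Fin d → Fin 2) → ℝ) (i : Fin d) :
    ∑ α, k α * sg (α i) = hypSum k i 1 - hypSum k i 0 := by
  unfold hypSum
  rw [Finset.sum_filter, Finset.sum_filter, ← Finset.sum_sub_distrib]
  refine Finset.sum_congr rfl fun α _ => ?_
  rcases Fin.exists_fin_two.1 ⟨α i, rfl⟩ with h | h <;> simp [h, sg]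

lemma hypSum_add {d : ℕ} (k : (Fin d → Fin 2) → ℝ) (i : Fin d) :
    ∑ α, k α = hypSum k i 1 + hypSum k i 0 := by
  unfold hypSum
  rw [Finset.sum_filter, Finset.sum_filter, ← Finset.sum_add_distrib]
  refine Finset.sum_congr rfl fun α _ => ?_
  rcases Fin.exists_fin_two.1 ⟨α i, rfl⟩ with h | h <;> simp [h]

lemma sum_dotS {d : ℕ} (k : (Fin d → Fin 2) → ℝ) (w : Fin d → ℝ)
    (hk : ∀ i j, hypSum k i j = 1) : ∑ α, k α * dotS w α = 0 := by
  unfold dotS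
  simp_rw [Finset.mul_sum]
  rw [Finset.sum_comm]
  refine Finset.sum_eq_zero fun i _ => ?_
  have := hypSum_diff k i
  rw [hk, hk, sub_self] at this
  calc ∑ α, k α * (w i * sg (α i)) = w i * ∑ α, k α * sg (α i) := by
        rw [Finset.mul_sum]; exact Finset.sum_congr rfl fun _ _ => by ring
    _ = 0 := by rw [this, mul_zero]

/-- A matrix whose support lies in an open half space has no polydiagonal. -/
lemma no_polydiagonal_of_pos {d : ℕ} (hd : 0 < d) (A : (Fin d → Fin 2) → Bool) (w : Fin d → ℝ)
    (hw : ∀ α, A α = true → 0 < dotS w α) : ¬ HasPolydiagonal A := by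
  rintro ⟨k, hk0, hkA, hk1⟩
  have h0 := sum_dotS k w hk1
  have hnn : ∀ α ∈ (Finset.univ : Finset (Fin d → Fin 2)), 0 ≤ k α * dotS w α := by
    intro α _
    cases hA : A α
    · simp [hkA α hA]
    · exact mul_nonneg (hk0 α) (hw α hA).le
  have hz := (Finset.sum_eq_zero_iff_of_nonneg hnn).1 h0
  have hkz : ∀ α, k α = 0 := by
    intro α
    cases hA : A α
    · exact hkA α hA
    · have := hz α (Finset.mem_univ _)
      exact (mul_eq_zero.1 this).resolve_right (hw α hA).ne'
  have := hk1 ⟨0, hd⟩ 0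
  simp [hypSum, hkz] at this

lemma threshold_extremal {d : ℕ} (A : (Fin d → Fin 2) → Bool) (w : Fin d → ℝ)
    (hw : ∀ α, A α = true ↔ 0 < dotS w α) (hne : ∀ α, dotS w α ≠ 0) : IsExtremal A := by
  have hd : 0 < d := by
    rcases Nat.eq_zero_or_pos d with h | h
    · subst h
      exact absurd (by simp [dotS]) (hne (fun _ => 0))
    · exact h
  refine ⟨no_polydiagonal_of_pos hd A w fun α => (hw α).1, fun β hβ => ?_⟩
  set γ : Fin d → Fin 2 := fun i => flipB (β i) with hγ
  have hγβ : γ ≠ β := fun h => flipB_ne _ (congrFun h ⟨0, hd⟩)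
  have hγA : A γ = true := by
    rw [hw, hγ, dotS_flip]
    have h1 : ¬ 0 < dotS w β := by rw [← hw, hβ]; simp
    have := hne β
    have : dotS w β < 0 := lt_of_le_of_ne (not_lt.1 h1) this
    linarith
  refine ⟨fun α => (if α = β then 1 else 0) + (if α = γ then 1 else 0), ?_, ?_, ?_⟩
  · intro α; positivity
  · intro α hα
    unfold addEntry at hα
    by_cases h1 : α = β
    · simp [h1] at hα
    · by_cases h2 : α = γ
      · simp [h2, hγβ, hγA] at hα
      · simp [h1, h2]
  · intro i j
    unfold hypSum
    rw [Finset.sum_add_distrib]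
    simp only [Finset.sum_ite_eq', Finset.mem_filter, Finset.mem_univ, true_and]
    have : γ i = flipB (β i) := rfl
    rw [this]
    generalize β i = b
    fin_cases b <;> fin_cases j <;> simp [flipB]

/-- Farkas: without a polydiagonal, the support lies in an open half space. -/
lemma exists_pos_of_no_polydiagonal {d : ℕ} (A : (Fin d → Fin 2) → Bool)
    (hA : ¬ HasPolydiagonal A) : ∃ w : Fin d → ℝ, ∀ α, A α = true → 0 < dotS w α := by
  classical
  set vec : (Fin d → Fin 2) → (Fin d → ℝ) := fun α i => sg (α i) with hvec
  have hinj : Function.Injective vec := fun α β h => funext fun i => sg_inj (congrFun h i)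
  set S : Finset (Fin d → ℝ) := (Finset.univ.filter fun α => A α = true).image vec with hS
  by_cases h0 : (0 : Fin d → ℝ) ∈ convexHull ℝ (S : Set (Fin d → ℝ))
  · exfalso
    rw [Finset.mem_convexHull'] at h0
    obtain ⟨u, hu0, hu1, hu2⟩ := h0
    apply hA
    rw [hS, Finset.sum_image fun _ _ _ _ h => hinj h, Finset.sum_filter] at hu1 hu2
    set k : (Fin d → Fin 2) → ℝ := fun α => 2 * (if A α = true then u (vec α) else 0) with hk
    have hk2 : ∑ α, k α = 2 := by rw [hk, ← Finset.mul_sum, hu1, mul_one]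
    have hkd : ∀ i, ∑ α, k α * sg (α i) = 0 := by
      intro i
      have := congrFun hu2 i
      rw [Finset.sum_apply] at this
      have h2 : ∑ α, k α * sg (α i) = 2 * ∑ α, (if A α = true then u (vec α) • vec α else 0) i := by
        rw [Finset.mul_sum]
        refine Finset.sum_congr rfl fun α _ => ?_
        simp only [hk]
        split_ifs <;> simp [hvec, mul_assoc]
      rw [h2, this]; simp
    refine ⟨k, ?_, ?_, ?_⟩
    · intro α
      simp only [hk]
      split_ifs with h
      · have := hu0 (vec α) (by rw [hS]; exact Finset.mem_image_of_mem _ (by simp [h]))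
        positivity
      · simp
    · intro α h; simp [hk, h]
    · intro i j
      have h1 := hypSum_diff k i
      have h2 := hypSum_add k i
      rw [hkd] at h1
      rw [hk2] at h2
      fin_cases j
      · change hypSum k i 0 = 1; linarith
      · change hypSum k i 1 = 1; linarith
  · obtain ⟨f, u, hf0, hf⟩ := geometric_hahn_banach_point_closed (convex_convexHull ℝ _)
      (Set.Finite.isClosed_convexHull ℝ S.finite_toSet) h0
    refine ⟨fun i => f (Pi.single i 1), fun α hα => ?_⟩
    have h1 := hf (vec α) (subset_convexHull ℝ _ (by
      rw [hS]; exact Finset.mem_coe.2 (Finset.mem_image_of_mem _ (by simp [hα]))))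
    rw [map_zero] at hf0
    have h2 : f (vec α) = dotS (fun i => f (Pi.single i 1)) α := by
      have : vec α = ∑ i, sg (α i) • (Pi.single i (1 : ℝ) : Fin d → ℝ) := by
        ext j; simp [hvec, Finset.sum_apply, Pi.single_apply]
      rw [this, map_sum]
      unfold dotS
      refine Finset.sum_congr rfl fun i _ => ?_
      rw [map_smul, smul_eq_mul, mul_comm]
    rw [← h2]; linarith

lemma extremal_threshold {d : ℕ} (hd : 0 < d) (A : (Fin d → Fin 2) → Bool) (hA : IsExtremal A) :
    ∃ w : Fin d → ℝ, ∀ α, A α = true ↔ 0 < dotS w α := by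
  obtain ⟨w, hw⟩ := exists_pos_of_no_polydiagonal A hA.1
  refine ⟨w, fun α => ⟨hw α, fun hα => ?_⟩⟩
  by_contra hA'
  have hA'' : A α = false := by simpa using hA'
  refine no_polydiagonal_of_pos hd _ w ?_ (hA.2 α hA'')
  intro β hβ
  unfold addEntry at hβ
  split_ifs at hβ with h
  · rwa [h]
  · exact hw β hβ

/-- Upper bound for the number of extremal matrices, via Sauer-Shelah. -/
lemma card_extremal_le {d : ℕ} (hd : 0 < d) :
    Nat.card {A : (Fin d → Fin 2) → Bool // IsExtremal A} ≤ (d + 1) * 2 ^ (d * d) := by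
  classical
  set 𝒜 : Finset (Finset (Fin d → Fin 2)) :=
    Finset.univ.filter fun s => ∃ w : Fin d → ℝ, ∀ α, α ∈ s ↔ 0 < dotS w α with h𝒜
  have h1 : Nat.card {A : (Fin d → Fin 2) → Bool // IsExtremal A} ≤ 𝒜.card := by
    rw [Nat.card_eq_fintype_card, ← Finset.card_univ]
    refine Finset.card_le_card_of_injOn (fun A => Finset.univ.filter fun α => A.1 α = true) ?_ ?_
    · intro A _
      obtain ⟨w, hw⟩ := extremal_threshold hd A.1 A.2
      simp only [h𝒜, Finset.coe_filter, Finset.mem_univ, true_and, Set.mem_ofPred_eq,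
        Finset.mem_filter]
      exact ⟨w, hw⟩
    · intro A _ B _ h
      ext α
      have := Finset.ext_iff.1 h α
      simp only [Finset.mem_filter, Finset.mem_univ, true_and] at this
      exact Bool.eq_iff_iff.2 this
  have h2 : 𝒜.vcDim ≤ d := by
    unfold Finset.vcDim
    refine Finset.sup_le fun s hs => ?_
    rw [Finset.mem_shatterer] at hs
    by_contra hlt
    push Not at hlt
    have hdep : ¬ LinearIndependent ℝ (fun x : s => (fun i => sg (x.1 i) : Fin d → ℝ)) := by
      intro hli
      have := hli.fintype_card_le_finrank
      simp at this
      omega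
    rw [Fintype.not_linearIndependent_iff] at hdep
    obtain ⟨g, hg, x0, hx0⟩ := hdep
    obtain ⟨g, hg, x0, hx0⟩ : ∃ g : s → ℝ, ∑ i, g i • (fun j => sg (i.1 j) : Fin d → ℝ) = 0 ∧
        ∃ i, 0 < g i := by
      rcases lt_or_gt_of_ne hx0 with h | h
      · refine ⟨fun i => - g i, ?_, x0, by simpa using h⟩
        simp only [neg_smul, Finset.sum_neg_distrib, hg, neg_zero]
      · exact ⟨g, hg, x0, h⟩
    obtain ⟨u, hu, hsu⟩ := hs (t := (Finset.univ.filter fun x : s => 0 < g x).map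
      ⟨Subtype.val, Subtype.val_injective⟩) (by
        intro x hx
        simp only [Finset.mem_map, Function.Embedding.coeFn_mk] at hx
        obtain ⟨y, -, rfl⟩ := hx
        exact y.2)
    obtain ⟨w, hw⟩ := (Finset.mem_filter.1 hu).2
    have hsum : ∑ x : s, g x * dotS w x.1 = 0 := by
      unfold dotS
      simp_rw [Finset.mul_sum]
      rw [Finset.sum_comm]
      refine Finset.sum_eq_zero fun i _ => ?_
      have h3 := congrFun hg i
      rw [Finset.sum_apply] at h3
      simp only [Pi.smul_apply, smul_eq_mul, Pi.zero_apply] at h3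
      calc ∑ x : s, g x * (w i * sg (x.1 i)) = w i * ∑ x : s, g x * sg (x.1 i) := by
            rw [Finset.mul_sum]; exact Finset.sum_congr rfl fun _ _ => by ring
        _ = 0 := by rw [h3, mul_zero]
    have hmem : ∀ x : s, (0 < dotS w x.1 ↔ 0 < g x) := by
      intro x
      rw [← hw]
      have := Finset.ext_iff.1 hsu x.1
      simp only [Finset.mem_inter, x.2, true_and, Finset.mem_map, Finset.mem_filter,
        Finset.mem_univ, Function.Embedding.coeFn_mk] at this
      rw [this]
      constructor
      · rintro ⟨y, hy, hxy⟩
        rwa [← Subtype.ext hxy]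
      · exact fun h => ⟨x, h, rfl⟩
    have hpos : 0 < ∑ x : s, g x * dotS w x.1 := by
      refine Finset.sum_pos' (fun x _ => ?_) ⟨x0, Finset.mem_univ _, mul_pos hx0 ((hmem _).2 hx0)⟩
      by_cases h : 0 < g x
      · exact (mul_pos h ((hmem _).2 h)).le
      · exact mul_nonneg_of_nonpos_of_nonpos (not_lt.1 h) (not_lt.1 fun h' => h ((hmem _).1 h'))
    linarith
  calc _ ≤ 𝒜.card := h1
    _ ≤ 𝒜.shatterer.card := Finset.card_le_card_shatterer _
    _ ≤ ∑ k ∈ Finset.Iic 𝒜.vcDim, (Fintype.card (Fin d → Fin 2)).choose k :=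
        Finset.card_shatterer_le_sum_vcDim
    _ ≤ ∑ k ∈ Finset.Iic d, (Fintype.card (Fin d → Fin 2)).choose k :=
        Finset.sum_le_sum_of_subset (Finset.Iic_subset_Iic.2 h2)
    _ ≤ ∑ k ∈ Finset.Iic d, 2 ^ (d * d) := by
        refine Finset.sum_le_sum fun k hk => ?_
        rw [Finset.mem_Iic] at hk
        simp only [Fintype.card_pi, Fintype.card_fin, Finset.prod_const, Finset.card_univ]
        refine (Nat.choose_le_pow _ _).trans ?_
        rw [← pow_mul]
        exact Nat.pow_le_pow_right (by norm_num) (Nat.mul_le_mul_left _ hk)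
    _ = (d + 1) * 2 ^ (d * d) := by simp

lemma matEquiv_refl {d n : ℕ} (A : (Fin d → Fin n) → Bool) : MatEquiv A A :=
  ⟨1, fun _ => 1, fun _ => rfl⟩

lemma matEquiv_symm {d n : ℕ} {A B : (Fin d → Fin n) → Bool} (h : MatEquiv A B) :
    MatEquiv B A := by
  obtain ⟨π, σ, h⟩ := h
  refine ⟨π.symm, fun j => (σ (π.symm j)).symm, fun α => ?_⟩
  rw [h]
  congr 1
  funext j
  simp

lemma matEquiv_trans {d n : ℕ} {A B C : (Fin d → Fin n) → Bool} (h : MatEquiv A B)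
    (h' : MatEquiv B C) : MatEquiv A C := by
  obtain ⟨π, σ, h⟩ := h
  obtain ⟨π', σ', h'⟩ := h'
  refine ⟨π'.trans π, fun i => (σ' i).trans (σ (π' i)), fun α => ?_⟩
  rw [h', h]
  congr 1
  funext j
  simp

lemma card_extremal_le_mul_M (d : ℕ) :
    Nat.card {A : (Fin d → Fin 2) → Bool // IsExtremal A} ≤ (d.factorial * 2 ^ d) * M d := by
  classical
  unfold M
  set r : {A : (Fin d → Fin 2) → Bool // IsExtremal A} →
    {A : (Fin d → Fin 2) → Bool // IsExtremal A} → Prop := fun A B => MatEquiv A.1 B.1 with hr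
  have hreq : Equivalence r := ⟨fun A => matEquiv_refl _, fun h => matEquiv_symm h,
    fun h h' => matEquiv_trans h h'⟩
  have : Fintype (Quot r) := Fintype.ofFinite _
  rw [Nat.card_eq_fintype_card, Nat.card_eq_fintype_card, ← Finset.card_univ, ← Finset.card_univ]
  refine Finset.card_le_mul_card_image_of_maps_to (f := Quot.mk r) (fun _ _ => Finset.mem_univ _)
    _ ?_
  intro q _
  obtain ⟨A, rfl⟩ := Quot.exists_rep q
  have hc : (d.factorial * 2 ^ d) = Fintype.card (Equiv.Perm (Fin d) × (Fin d → Equiv.Perm (Fin 2))) := by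
    rw [Fintype.card_prod, Fintype.card_perm, Fintype.card_fin, Fintype.card_pi]
    simp [Fintype.card_perm]
  rw [hc, ← Finset.card_univ]
  have hex : ∀ B : {B : {A : (Fin d → Fin 2) → Bool // IsExtremal A} // Quot.mk r B = Quot.mk r A},
      ∃ p : Equiv.Perm (Fin d) × (Fin d → Equiv.Perm (Fin 2)),
        ∀ α, B.1.1 α = A.1 (fun j => p.2 (p.1.symm j) (α (p.1.symm j))) := by
    intro B
    have := (Quot.eqvGen_exact B.2.symm)
    rw [hreq.eqvGen_iff] at this
    obtain ⟨π, σ, h⟩ := this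
    exact ⟨(π, σ), h⟩
  choose p hp using hex
  refine Finset.card_le_card_of_injOn
    (fun B => if h : Quot.mk r B = Quot.mk r A then p ⟨B, h⟩ else (1, fun _ => 1))
    (fun _ _ => Finset.mem_coe.2 (Finset.mem_univ _)) ?_
  intro B hB C hC hBC
  have hB' : Quot.mk r B = Quot.mk r A := by simpa using hB
  have hC' : Quot.mk r C = Quot.mk r A := by simpa using hC
  simp only [hB', hC', dif_pos] at hBC
  apply Subtype.ext
  funext α
  rw [hp ⟨B, hB'⟩, hp ⟨C, hC'⟩, hBC]

lemma M_le_card_extremal (d : ℕ) :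
    M d ≤ Nat.card {A : (Fin d → Fin 2) → Bool // IsExtremal A} :=
  Nat.card_le_card_of_surjective (Quot.mk _) Quot.mk_surjective

/-- Dual Sauer-Shelah: a family is at least as large as the family of sets which it shatters
with a fixed trace outside. -/
lemma card_strongly_shattered_le {X : Type*} [Fintype X] [DecidableEq X]
    (𝓕 𝒢 : Finset (Finset X))
    (h : ∀ S ∈ 𝒢, ∃ B : Finset X, ∀ P ⊆ S, ∃ u ∈ 𝓕, (∀ x ∈ S, x ∈ u ↔ x ∈ P) ∧ ∀ x ∉ S, (x ∈ u ↔ x ∈ B)) :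
    𝒢.card ≤ 𝓕.card := by
  have h1 : 𝒢.card ≤ (𝓕ᶜ.shatterer)ᶜ.card := by
    refine Finset.card_le_card_of_injOn (fun S => Sᶜ) ?_ (fun S _ T _ h => compl_injective h)
    intro S hS
    simp only [Finset.coe_compl, Set.mem_compl_iff, Finset.mem_coe, Finset.mem_shatterer]
    intro hsh
    obtain ⟨B, hB⟩ := h S hS
    obtain ⟨u, hu, hSu⟩ := hsh (t := Sᶜ ∩ B) Finset.inter_subset_left
    obtain ⟨v, hv, hv1, hv2⟩ := hB (S ∩ u) Finset.inter_subset_left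
    have : u = v := by
      ext x
      by_cases hx : x ∈ S
      · rw [hv1 x hx]; simp [hx]
      · rw [hv2 x hx]
        have := Finset.ext_iff.1 hSu x
        simpa [hx] using this
    rw [Finset.mem_compl] at hu
    exact hu (this ▸ hv)
  have h2 := Finset.card_le_card_shatterer 𝓕ᶜ
  rw [Finset.card_compl] at h1 h2
  have h3 : 𝓕.card ≤ Fintype.card (Finset X) := Finset.card_le_univ _
  omega

/-- The columns of `N` are independent and span no other sign vectors. -/
def GoodMat {n k : ℕ} (N : Fin n → Fin k → Fin 2) : Prop :=
  (∀ c : Fin k → ℝ, (∀ i, ∑ j, c j * sg (N i j) = 0) → c = 0) ∧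
  ∀ (c : Fin k → ℝ) (y : Fin n → Fin 2), (∀ i, ∑ j, c j * sg (N i j) = sg (y i)) →
    ∃ j, (∀ i, sg (y i) = sg (N i j)) ∨ (∀ i, sg (y i) = - sg (N i j))

/-- The augmented vector `(1, x)`. -/
noncomputable def augV {n : ℕ} (x : Fin n → Fin 2) : Fin (n + 1) → ℝ :=
  Fin.cons 1 (fun i => sg (x i))

lemma augV_eq {n : ℕ} (x : Fin n → Fin 2) :
    augV x = fun i => sg ((Fin.cons 1 x : Fin (n + 1) → Fin 2) i) := by
  funext i
  refine Fin.cases ?_ (fun i => ?_) i <;> simp [augV, sg]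

lemma good_strongly_shattered {n k : ℕ} (N : Fin n → Fin k → Fin 2) (hN : GoodMat N) :
    ∃ B : Finset (Fin n → Fin 2), ∀ P : Finset (Fin n → Fin 2), ∃ f : Module.Dual ℝ (Fin (n + 1) → ℝ),
      (∀ x, f (augV x) ≠ 0) ∧
      (∀ j, 0 < f (augV (fun i => N i j)) ↔ (fun i => N i j) ∈ P) ∧
      (∀ x, (∀ j, x ≠ fun i => N i j) → (0 < f (augV x) ↔ x ∈ B)) := by
  classical
  set u : Fin k → (Fin (n + 1) → ℝ) := fun j => augV (fun i => N i j) with hu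
  have hcomb : ∀ (c : Fin k → ℝ) (i : Fin n), (∑ j, c j • u j) i.succ = ∑ j, c j * sg (N i j) := by
    intro c i
    simp [Finset.sum_apply, hu, augV]
  have hli : LinearIndependent ℝ u := by
    rw [Fintype.linearIndependent_iff]
    intro g hg
    have := hN.1 g (fun i => by rw [← hcomb, hg]; rfl)
    intro j; rw [this]; rfl
  have hout : ∀ x : Fin n → Fin 2, (∀ j, x ≠ fun i => N i j) →
      augV x ∉ Submodule.span ℝ (Set.range u) := by
    intro x hx hmem
    rw [Submodule.mem_span_range_iff_exists_fun] at hmem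
    obtain ⟨c, hc⟩ := hmem
    have hc' : ∀ i, ∑ j, c j * sg (N i j) = sg (x i) := by
      intro i; rw [← hcomb, hc]; simp [augV]
    have hc0 : ∑ j, c j = 1 := by
      have := congrFun hc 0
      simpa [Finset.sum_apply, hu, augV] using this
    obtain ⟨j, hj | hj⟩ := hN.2 c x hc'
    · exact hx j (funext fun i => sg_inj (hj i))
    · have h0 := hN.1 (fun l => c l + if l = j then 1 else 0) (fun i => by
        simp only [add_mul, Finset.sum_add_distrib, hc', hj]
        simp)
      have h1 : ∑ l, (c l + if l = j then 1 else 0) = 0 :=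
        Finset.sum_eq_zero fun l _ => congrFun h0 l
      rw [Finset.sum_add_distrib, hc0] at h1
      simp at h1
  obtain ⟨f0, hf0, hf0'⟩ := Module.Dual.exists_forall_mem_ne_zero_of_forall_exists
    (ι := {x : Fin n → Fin 2 // ∀ j, x ≠ fun i => N i j}) (K := ℝ)
    ((Submodule.span ℝ (Set.range u)).dualAnnihilator)
    (fun x => Module.Dual.eval ℝ (Fin (n + 1) → ℝ) (augV x.1)) (by
      intro x
      obtain ⟨f, hf1, hf2⟩ := Submodule.exists_le_ker_of_notMem (hout x.1 x.2)
      refine ⟨f, ?_, hf1⟩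
      rw [Submodule.mem_dualAnnihilator]
      intro w hw
      exact hf2 hw)
  rw [Submodule.mem_dualAnnihilator] at hf0
  refine ⟨Finset.univ.filter fun x => 0 < f0 (augV x), fun P => ?_⟩
  set e : Fin k → ℝ := fun j => if (fun i => N i j) ∈ P then 1 else -1 with he
  obtain ⟨f1, hf1⟩ : ∃ f1 : Module.Dual ℝ (Fin (n + 1) → ℝ), ∀ j, f1 (u j) = e j := by
    let b := Module.Basis.span hli
    obtain ⟨g, hg⟩ := LinearMap.exists_extend (b.constr ℝ e)
    refine ⟨g, fun j => ?_⟩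
    have h1 : g (b j : Fin (n + 1) → ℝ) = (b.constr ℝ e) (b j) := by
      rw [← hg]; rfl
    rw [Module.Basis.constr_basis] at h1
    rw [← h1]
    congr 1
    exact (congrArg Subtype.val (Module.Basis.span_apply hli j)).symm
  have hev : ∀ᶠ t : ℝ in Filter.atTop, ∀ x : {x : Fin n → Fin 2 // ∀ j, x ≠ fun i => N i j},
      (t * f0 (augV x.1) + f1 (augV x.1) ≠ 0 ∧
        (0 < t * f0 (augV x.1) + f1 (augV x.1) ↔ 0 < f0 (augV x.1))) := by
    rw [Filter.eventually_all]
    intro x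
    have h0 : f0 (augV x.1) ≠ 0 := hf0' x
    rcases lt_or_gt_of_ne h0 with h | h
    · have ht : Filter.Tendsto (fun t : ℝ => t * f0 (augV x.1) + f1 (augV x.1))
          Filter.atTop Filter.atBot :=
        Filter.tendsto_atBot_add_const_right _ _ (Filter.tendsto_id.atTop_mul_const_of_neg h)
      filter_upwards [ht.eventually_lt_atBot 0] with t ht
      exact ⟨ht.ne, iff_of_false (not_lt.2 ht.le) (not_lt.2 h.le)⟩
    · have ht : Filter.Tendsto (fun t : ℝ => t * f0 (augV x.1) + f1 (augV x.1))
          Filter.atTop Filter.atTop :=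
        Filter.tendsto_atTop_add_const_right _ _ (Filter.tendsto_id.atTop_mul_const h)
      filter_upwards [ht.eventually_gt_atTop 0] with t ht
      exact ⟨ht.ne', iff_of_true ht h⟩
  obtain ⟨t, ht⟩ := hev.exists
  have hval : ∀ x, (t • f0 + f1) (augV x) = t * f0 (augV x) + f1 (augV x) := fun x => by simp
  have hin : ∀ j, (t • f0 + f1) (augV (fun i => N i j)) = e j := by
    intro j
    rw [hval]
    have h1 : f0 (u j) = 0 := hf0 _ (Submodule.subset_span ⟨j, rfl⟩)
    have h2 := hf1 j
    simp only [hu] at h1 h2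
    rw [h1, h2]; ring
  refine ⟨t • f0 + f1, ?_, ?_, ?_⟩
  · intro x
    by_cases hx : ∀ j, x ≠ fun i => N i j
    · rw [hval]; exact (ht ⟨x, hx⟩).1
    · push Not at hx
      obtain ⟨j, rfl⟩ := hx
      rw [hin]
      simp only [he]; split_ifs <;> norm_num
  · intro j
    rw [hin]
    simp only [he]; split_ifs with h <;> simp [h]
  · intro x hx
    rw [hval, (ht ⟨x, hx⟩).2]
    simp

open Classical in
lemma card_good_le (n k : ℕ) :
    (Finset.univ.filter fun N : Fin n → Fin k → Fin 2 => GoodMat N).card ≤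
      k ^ k * Nat.card {A : (Fin (n + 1) → Fin 2) → Bool // IsExtremal A} := by
  set col : (Fin n → Fin k → Fin 2) → Fin k → (Fin n → Fin 2) := fun N j i => N i j with hcol
  set S : (Fin n → Fin k → Fin 2) → Finset (Fin n → Fin 2) :=
    fun N => Finset.univ.image (col N) with hS
  set G := Finset.univ.filter fun N : Fin n → Fin k → Fin 2 => GoodMat N with hG
  have h1 : G.card ≤ k ^ k * (G.image S).card := by
    refine Finset.card_le_mul_card_image _ _ ?_
    intro s hs
    obtain ⟨N0, hN0, rfl⟩ := Finset.mem_image.1 hs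
    have hsc : (S N0).card ≤ k := by
      refine Finset.card_image_le.trans ?_
      simp
    have hmaps : Set.MapsTo col ↑({x ∈ G | S x = S N0} : Finset _) ↑(Fintype.piFinset fun _ : Fin k => S N0) := by
      intro N hN
      rw [Finset.mem_coe, Finset.mem_filter] at hN
      rw [Finset.mem_coe, Fintype.mem_piFinset]
      intro j
      rw [← hN.2]
      exact Finset.mem_image_of_mem _ (Finset.mem_univ _)
    refine (Finset.card_le_card_of_injOn col hmaps ?_).trans ?_
    · intro N _ N' _ h
      funext i j
      exact congrFun (congrFun h j) i
    · rw [Fintype.card_piFinset]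
      simp only [Finset.prod_const, Finset.card_univ, Fintype.card_fin]
      exact Nat.pow_le_pow_left hsc _
  refine h1.trans (Nat.mul_le_mul_left _ ?_)
  set 𝓕 : Finset (Finset (Fin n → Fin 2)) :=
    (Finset.univ : Finset {A : (Fin (n + 1) → Fin 2) → Bool // IsExtremal A}).image
      (fun A => Finset.univ.filter fun x : Fin n → Fin 2 => A.1 (Fin.cons 1 x) = true) with h𝓕
  have h2 : 𝓕.card ≤ Nat.card {A : (Fin (n + 1) → Fin 2) → Bool // IsExtremal A} := by
    refine Finset.card_image_le.trans ?_
    rw [Nat.card_eq_fintype_card, Finset.card_univ]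
  refine le_trans ?_ h2
  refine card_strongly_shattered_le _ _ ?_
  intro s hs
  obtain ⟨N, hN, rfl⟩ := Finset.mem_image.1 hs
  obtain ⟨B, hB⟩ := good_strongly_shattered N (Finset.mem_filter.1 hN).2
  refine ⟨B, fun P _ => ?_⟩
  obtain ⟨f, hf0, hf1, hf2⟩ := hB P
  set w : Fin (n + 1) → ℝ := fun i => f (Pi.single i 1) with hw
  have hdot : ∀ α : Fin (n + 1) → Fin 2, dotS w α = f (fun i => sg (α i)) := by
    intro α
    have : (fun i => sg (α i)) = ∑ i, sg (α i) • (Pi.single i (1 : ℝ) : Fin (n + 1) → ℝ) := by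
      ext j; simp [Finset.sum_apply, Pi.single_apply]
    rw [this, map_sum]
    unfold dotS
    refine Finset.sum_congr rfl fun i _ => ?_
    rw [map_smul, smul_eq_mul, mul_comm]
  have hdot1 : ∀ x : Fin n → Fin 2, dotS w (Fin.cons 1 x) = f (augV x) := by
    intro x; rw [hdot, augV_eq]
  have hne1 : ∀ α : Fin (n + 1) → Fin 2, α 0 = 1 → dotS w α ≠ 0 := by
    intro α hα
    have : α = Fin.cons 1 (Fin.tail α) := by rw [← hα, Fin.cons_self_tail]
    rw [this, hdot1]
    exact hf0 _
  have hne : ∀ α : Fin (n + 1) → Fin 2, dotS w α ≠ 0 := by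
    intro α
    rcases Fin.exists_fin_two.1 ⟨α 0, rfl⟩ with h | h
    · have h3 := hne1 (fun i => flipB (α i)) (by simp [h, flipB])
      rw [dotS_flip] at h3
      simpa using h3
    · exact hne1 α h
  have hext := threshold_extremal (fun α => decide (0 < dotS w α)) w (fun α => by simp) hne
  refine ⟨Finset.univ.filter fun x : Fin n → Fin 2 => decide (0 < dotS w (Fin.cons 1 x)) = true,
    Finset.mem_image.2 ⟨⟨_, hext⟩, Finset.mem_univ _, rfl⟩, ?_, ?_⟩
  · intro x hx
    obtain ⟨j, -, rfl⟩ := Finset.mem_image.1 hx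
    simp only [decide_eq_true_eq, Finset.mem_filter, Finset.mem_univ, true_and, hdot1]
    exact hf1 j
  · intro x hx
    simp only [decide_eq_true_eq, Finset.mem_filter, Finset.mem_univ, true_and, hdot1]
    refine hf2 x fun j hj => hx ?_
    rw [hj]
    exact Finset.mem_image_of_mem (col N) (Finset.mem_univ j)

/-- The value of the linear form `c` on the sign row `r`. -/
noncomputable def rowS {k : ℕ} (c : Fin k → ℝ) (r : Fin k → Fin 2) : ℝ := ∑ j, c j * sg (r j)

lemma mul_sg_abs (x : ℝ) (a : Fin 2) : x * sg a = |x| ∨ x * sg a = -|x| := by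
  rcases sg_cases a with h | h <;> rw [h] <;> rcases abs_cases x with h' | h' <;>
    [left; right; right; left] <;> linarith

open Classical in
/-- Erdős-Littlewood-Offord. -/
lemma littlewood_offord {k : ℕ} (c : Fin k → ℝ) (T : Finset (Fin k)) (hT : ∀ j, c j ≠ 0 ↔ j ∈ T)
    (v : ℝ) : (Finset.univ.filter fun r : Fin k → Fin 2 => rowS c r = v).card ≤
      T.card.choose (T.card / 2) * 2 ^ (k - T.card) := by
  set F := Finset.univ.filter fun r : Fin k → Fin 2 => rowS c r = v with hF
  set f : (Fin k → Fin 2) → (Fin k → Fin 2) := fun r j => if j ∈ T then 0 else r j with hf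
  have h1 : (F.image f).card ≤ 2 ^ (k - T.card) := by
    have : F.image f ⊆ Fintype.piFinset fun j => if j ∈ T then {0} else Finset.univ := by
      intro g hg
      obtain ⟨r, -, rfl⟩ := Finset.mem_image.1 hg
      rw [Fintype.mem_piFinset]
      intro j
      by_cases hj : j ∈ T <;> simp [hf, hj]
    refine (Finset.card_le_card this).trans ?_
    rw [Fintype.card_piFinset]
    have h2 : ∀ j : Fin k, (if j ∈ T then ({0} : Finset (Fin 2)) else Finset.univ).card =
        if j ∈ T then 1 else 2 := by
      intro j; split_ifs <;> simp
    simp_rw [h2]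
    rw [Finset.prod_ite]
    simp only [Finset.prod_const_one, one_mul, Finset.prod_const]
    refine Nat.pow_le_pow_right (by norm_num) ?_
    have h3 : (Finset.univ.filter fun j => j ∉ T) = Tᶜ := by ext; simp
    rw [h3, Finset.card_compl, Fintype.card_fin]
  refine (Finset.card_le_mul_card_image (f := f) F (T.card.choose (T.card / 2)) ?_).trans
    (Nat.mul_le_mul_left _ h1)
  intro g _
  set φ : (Fin k → Fin 2) → Finset T :=
    fun r => Finset.univ.filter fun j : T => 0 < c j.1 * sg (r j.1) with hφ
  have key : ∀ r r' : Fin k → Fin 2, rowS c r = v → rowS c r' = v → φ r ⊆ φ r' →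
      ∀ j, c j * sg (r j) = c j * sg (r' j) := by
    intro r r' hr hr' hsub
    have hle : ∀ j ∈ Finset.univ, c j * sg (r j) ≤ c j * sg (r' j) := by
      intro j _
      by_cases hj : j ∈ T
      · have habs : 0 < |c j| := abs_pos.2 ((hT j).2 hj)
        rcases mul_sg_abs (c j) (r j) with h | h
        · have : (⟨j, hj⟩ : T) ∈ φ r' := hsub (by simp [hφ, h, habs])
          simp only [hφ, Finset.mem_filter, Finset.mem_univ, true_and] at this
          rcases mul_sg_abs (c j) (r' j) with h' | h' <;> linarith
        · rcases mul_sg_abs (c j) (r' j) with h' | h' <;> linarith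
      · have : c j = 0 := by by_contra h; exact hj ((hT j).1 h)
        simp [this]
    have := (Finset.sum_eq_sum_iff_of_le hle).1 (hr.trans hr'.symm)
    exact fun j => this j (Finset.mem_univ _)
  have hinj : Set.InjOn φ ↑(F.filter fun r => f r = g) := by
    intro r hr r' hr' h
    simp only [hF, Finset.coe_filter, Finset.mem_filter, Finset.mem_univ, true_and,
      Set.mem_ofPred_eq] at hr hr'
    have h2 := key r r' hr.1 hr'.1 h.le
    funext j
    by_cases hj : j ∈ T
    · exact sg_inj (mul_left_cancel₀ ((hT j).2 hj) (h2 j))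
    · have := congrFun (hr.2.trans hr'.2.symm) j
      simpa [hf, hj] using this
  rw [← Finset.card_image_of_injOn hinj]
  have hanti : IsAntichain (· ⊆ ·)
      (SetLike.coe ((F.filter fun r => f r = g).image φ)) := by
    intro s hs t ht hne hst
    obtain ⟨r, hr, rfl⟩ := Finset.mem_image.1 (Finset.mem_coe.1 hs)
    obtain ⟨r', hr', rfl⟩ := Finset.mem_image.1 (Finset.mem_coe.1 ht)
    simp only [hF, Finset.mem_filter, Finset.mem_univ, true_and] at hr hr'
    have h2 := key r r' hr.1 hr'.1 hst
    apply hne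
    simp only [hφ, h2]
  have := hanti.sperner
  rwa [Fintype.card_coe] at this

open Classical in
/-- The rows on which `c` takes a sign value. -/
noncomputable def signRows {k : ℕ} (c : Fin k → ℝ) : Finset (Fin k → Fin 2) :=
  Finset.univ.filter fun r => rowS c r = 1 ∨ rowS c r = -1

lemma signRows_card_le_lo {k : ℕ} (c : Fin k → ℝ) (T : Finset (Fin k))
    (hT : ∀ j, c j ≠ 0 ↔ j ∈ T) :
    (signRows c).card ≤ 2 * (T.card.choose (T.card / 2) * 2 ^ (k - T.card)) := by
  classical
  unfold signRows
  rw [Finset.filter_or]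
  refine (Finset.card_union_le _ _).trans ?_
  have h1 := littlewood_offord c T hT 1
  have h2 := littlewood_offord c T hT (-1)
  rw [two_mul]
  exact Nat.add_le_add h1 h2

lemma signRows_card_le_three {k : ℕ} (c : Fin k → ℝ) (a b : Fin k) (hab : a ≠ b)
    (ha : c a ≠ 0) (hb : c b ≠ 0) : (signRows c).card ≤ 3 * 2 ^ (k - 2) := by
  classical
  set F := signRows c with hF
  set f : (Fin k → Fin 2) → (Fin k → Fin 2) :=
    fun r => Function.update (Function.update r a 0) b 0 with hf
  have h1 : (F.image f).card ≤ 2 ^ (k - 2) := by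
    have : F.image f ⊆ Fintype.piFinset fun j => if j ∈ ({a, b} : Finset (Fin k)) then {0} else Finset.univ := by
      intro g hg
      obtain ⟨r, -, rfl⟩ := Finset.mem_image.1 hg
      rw [Fintype.mem_piFinset]
      intro j
      by_cases hjb : j = b
      · subst hjb; simp [hf]
      · by_cases hja : j = a
        · subst hja; simp [hf, hjb]
        · simp [hja, hjb]
    refine (Finset.card_le_card this).trans ?_
    rw [Fintype.card_piFinset]
    have h2 : ∀ j : Fin k, (if j ∈ ({a, b} : Finset (Fin k)) then ({0} : Finset (Fin 2)) else Finset.univ).card =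
        if j ∈ ({a, b} : Finset (Fin k)) then 1 else 2 := by
      intro j; split_ifs <;> simp
    simp_rw [h2]
    rw [Finset.prod_ite]
    simp only [Finset.prod_const_one, one_mul, Finset.prod_const]
    refine Nat.pow_le_pow_right (by norm_num) ?_
    have h3 : (Finset.univ.filter fun j => j ∉ ({a, b} : Finset (Fin k))) = ({a, b} : Finset (Fin k))ᶜ := by
      ext; simp
    rw [h3, Finset.card_compl, Fintype.card_fin, Finset.card_pair hab]
  refine (Finset.card_le_mul_card_image (f := f) F 3 ?_).trans (Nat.mul_le_mul_left _ h1)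
  intro g _
  set h : Fin 2 × Fin 2 → (Fin k → Fin 2) :=
    fun p => Function.update (Function.update g a p.1) b p.2 with hh
  set ρ : ℝ := ∑ j ∈ (Finset.univ.erase a).erase b, c j * sg (g j) with hρ
  have hval : ∀ p, rowS c (h p) = c a * sg p.1 + (c b * sg p.2 + ρ) := by
    intro p
    unfold rowS
    rw [← Finset.add_sum_erase Finset.univ _ (Finset.mem_univ a),
      ← Finset.add_sum_erase (Finset.univ.erase a) _
        (Finset.mem_erase.2 ⟨hab.symm, Finset.mem_univ b⟩)]
    congr 1
    · simp [hh, hab]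
    congr 1
    · simp [hh]
    · refine Finset.sum_congr rfl fun j hj => ?_
      have hj1 : j ≠ b := (Finset.mem_erase.1 hj).1
      have hj2 : j ≠ a := (Finset.mem_erase.1 (Finset.mem_erase.1 hj).2).1
      simp [hh, hj1, hj2]
  obtain ⟨p, hp⟩ : ∃ p, h p ∉ F := by
    by_contra hcon
    push Not at hcon
    have hall : ∀ p : Fin 2 × Fin 2, c a * sg p.1 + (c b * sg p.2 + ρ) = 1 ∨
        c a * sg p.1 + (c b * sg p.2 + ρ) = -1 := by
      intro p
      have := hcon p
      rw [hF, signRows, Finset.mem_filter, hval] at this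
      exact this.2
    have e1 := hall (1, 1)
    have e2 := hall (1, 0)
    have e3 := hall (0, 1)
    have e4 := hall (0, 0)
    simp only [sg, if_true, one_ne_zero, if_false] at e1 e2 e3 e4
    rcases e1 with e1 | e1 <;> rcases e2 with e2 | e2 <;> rcases e3 with e3 | e3 <;>
      rcases e4 with e4 | e4 <;>
      first
        | (exact ha (by linarith))
        | (exact hb (by linarith))
  have hmaps : Set.MapsTo (fun r : Fin k → Fin 2 => (r a, r b))
      ↑(F.filter fun r => f r = g) ↑(Finset.univ.erase p) := by
    intro r hr
    rw [Finset.mem_coe, Finset.mem_filter] at hr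
    rw [Finset.mem_coe, Finset.mem_erase]
    refine ⟨fun hrp => hp ?_, Finset.mem_univ _⟩
    have : h p = r := by
      rw [← hrp, hh, ← hr.2, hf]
      funext j
      by_cases hjb : j = b
      · subst hjb; simp
      · by_cases hja : j = a
        · subst hja; simp [hjb]
        · simp [hja, hjb]
    rw [this]; exact hr.1
  refine (Finset.card_le_card_of_injOn _ hmaps ?_).trans ?_
  · intro r hr r' hr' hrr
    rw [Finset.mem_coe, Finset.mem_filter] at hr hr'
    have h3 := hr.2.trans hr'.2.symm
    simp only [Prod.mk.injEq] at hrr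
    funext j
    by_cases hjb : j = b
    · subst hjb; exact hrr.2
    · by_cases hja : j = a
      · subst hja; exact hrr.1
      · have := congrFun h3 j
        simpa [hf, hja, hjb] using this
  · rw [Finset.card_erase_of_mem (Finset.mem_univ _)]
    simp

/-- The bad event attached to a set of columns `T`, a set of rows `R` and signs `Y` on `R`. -/
def BadEv {n k : ℕ} (T : Finset (Fin k)) (R Y : Finset (Fin n)) (N : Fin n → Fin k → Fin 2) :
    Prop :=
  ∃ c : Fin k → ℝ, (∀ j, c j ≠ 0 ↔ j ∈ T) ∧
    (∀ i, rowS c (N i) = 1 ∨ rowS c (N i) = -1) ∧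
    (∀ i ∈ R, (rowS c (N i) = 1 ↔ i ∈ Y)) ∧
    ∀ c' : Fin k → ℝ, (∀ j, j ∉ T → c' j = 0) → (∀ i ∈ R, rowS c' (N i) = rowS c (N i)) → c' = c

open Classical in
lemma card_BadEv_le {n k : ℕ} (T : Finset (Fin k)) (R Y : Finset (Fin n)) (m : ℕ)
    (hm : ∀ c : Fin k → ℝ, (∀ j, c j ≠ 0 ↔ j ∈ T) → (signRows c).card ≤ m) :
    (Finset.univ.filter fun N : Fin n → Fin k → Fin 2 => BadEv T R Y N).card ≤
      m ^ (n - R.card) * (2 ^ k) ^ R.card := by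
  set F := Finset.univ.filter fun N : Fin n → Fin k → Fin 2 => BadEv T R Y N with hF
  set f : (Fin n → Fin k → Fin 2) → (Fin n → Fin k → Fin 2) :=
    fun N i => if i ∈ R then N i else 0 with hf
  have hRc : (Finset.univ.filter fun j => j ∉ R) = Rᶜ := by ext; simp
  have h1 : (F.image f).card ≤ (2 ^ k) ^ R.card := by
    have : F.image f ⊆ Fintype.piFinset fun i => if i ∈ R then Finset.univ else {0} := by
      intro g hg
      obtain ⟨r, -, rfl⟩ := Finset.mem_image.1 hg
      rw [Fintype.mem_piFinset]
      intro j
      by_cases hj : j ∈ R <;> simp [hf, hj]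
    refine (Finset.card_le_card this).trans ?_
    rw [Fintype.card_piFinset]
    have h2 : ∀ i : Fin n, (if i ∈ R then Finset.univ else ({0} : Finset (Fin k → Fin 2))).card =
        if i ∈ R then 2 ^ k else 1 := by
      intro i; split_ifs <;> simp
    simp_rw [h2]
    rw [Finset.prod_ite]
    simp
  refine (Finset.card_le_mul_card_image (f := f) F _ ?_).trans (Nat.mul_le_mul_left _ h1)
  intro g hg
  obtain ⟨N0, hN0, rfl⟩ := Finset.mem_image.1 hg
  obtain ⟨c, hc1, hc2, hc3, hc4⟩ := (Finset.mem_filter.1 hN0).2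
  have hsub : (F.filter fun N => f N = f N0) ⊆
      Fintype.piFinset fun i => if i ∈ R then {N0 i} else signRows c := by
    intro N hN
    rw [Finset.mem_filter] at hN
    obtain ⟨c', hc1', hc2', hc3', hc4'⟩ := (Finset.mem_filter.1 hN.1).2
    have hrow : ∀ i ∈ R, N i = N0 i := by
      intro i hi
      have := congrFun hN.2 i
      simpa [hf, hi] using this
    have hcc : c' = c := by
      refine hc4 c' (fun j hj => ?_) fun i hi => ?_
      · by_contra h; exact hj ((hc1' j).1 h)
      · have e1 := hc3 i hi
        have e2 := hc3' i hi
        have e3 := hc2 i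
        have e4 := hc2' i
        rw [hrow i hi] at e2 e4
        by_cases hY : i ∈ Y
        · rw [e2.2 hY, e1.2 hY]
        · rw [e3.resolve_left fun h => hY (e1.1 h), e4.resolve_left fun h => hY (e2.1 h)]
    rw [Fintype.mem_piFinset]
    intro i
    by_cases hi : i ∈ R
    · simp [hi, hrow i hi]
    · simp only [hi, if_false, signRows, Finset.mem_filter, Finset.mem_univ, true_and]
      rw [← hcc]; exact hc2' i
  refine (Finset.card_le_card hsub).trans ?_
  rw [Fintype.card_piFinset]
  have h2 : ∀ i : Fin n, (if i ∈ R then {N0 i} else signRows c).card =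
      if i ∈ R then 1 else (signRows c).card := by
    intro i; split_ifs <;> simp
  simp_rw [h2]
  rw [Finset.prod_ite]
  simp only [Finset.prod_const_one, one_mul, Finset.prod_const]
  rw [hRc, Finset.card_compl, Fintype.card_fin]
  exact Nat.pow_le_pow_left (hm c hc1) _

lemma rowS_sub {k : ℕ} (c c' : Fin k → ℝ) (r : Fin k → Fin 2) :
    rowS (c - c') r = rowS c r - rowS c' r := by
  simp [rowS, sub_mul, Finset.sum_sub_distrib]

/-- If the columns in `T` are independent, then `T.card` rows already determine combinations. -/
lemma exists_rows {n k : ℕ} (N : Fin n → Fin k → Fin 2) (T : Finset (Fin k)) (hTn : T.card ≤ n)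
    (hT : ∀ c : Fin k → ℝ, (∀ j, j ∉ T → c j = 0) → (∀ i, rowS c (N i) = 0) → c = 0) :
    ∃ R : Finset (Fin n), R.card = T.card ∧
      ∀ c : Fin k → ℝ, (∀ j, j ∉ T → c j = 0) → (∀ i ∈ R, rowS c (N i) = 0) → c = 0 := by
  classical
  set ρ : Fin n → (T → ℝ) := fun i t => sg (N i t.1) with hρ
  obtain ⟨b, -, -, hspan, hli⟩ := exists_linearIndepOn_extension (K := ℝ) (v := ρ)
    (linearIndepOn_empty ℝ ρ) (Set.empty_subset Set.univ)
  have hcard : b.toFinset.card ≤ T.card := by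
    have := LinearIndependent.fintype_card_le_finrank hli
    simpa [Set.toFinset_card] using this
  obtain ⟨R, hbR, hR⟩ := Finset.exists_superset_card_eq hcard (by simpa using hTn)
  refine ⟨R, hR, fun c hc h0 => hT c hc fun i => ?_⟩
  have hrow : ∀ i, rowS c (N i) = ∑ t : T, c t.1 * ρ i t := by
    intro i
    unfold rowS
    rw [Finset.sum_coe_sort T (fun j => c j * sg (N i j))]
    symm
    refine Finset.sum_subset (Finset.subset_univ _) fun j _ hj => ?_
    rw [hc j hj, zero_mul]
  set L : (T → ℝ) →ₗ[ℝ] ℝ := ∑ t : T, c t.1 • LinearMap.proj t with hL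
  have hLr : ∀ x, L x = ∑ t : T, c t.1 * x t := by
    intro x; simp [hL, LinearMap.sum_apply]
  rw [hrow, ← hLr]
  have hle : Submodule.span ℝ (ρ '' b) ≤ LinearMap.ker L := by
    rw [Submodule.span_le]
    rintro _ ⟨i, hi, rfl⟩
    rw [SetLike.mem_coe, LinearMap.mem_ker, hLr, ← hrow]
    exact h0 i (hbR (by simpa using hi))
  exact hle (hspan ⟨i, Set.mem_univ _, rfl⟩)

/-- If no bad event happens, sign vectors in the span of columns from `U` are `±` columns. -/
lemma span_of_no_bad {n k : ℕ} (hn : 0 < n) (hkn : k ≤ n) (N : Fin n → Fin k → Fin 2)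
    (hno : ∀ (T : Finset (Fin k)) (R Y : Finset (Fin n)), 2 ≤ T.card → R.card = T.card → Y ⊆ R →
      ¬ BadEv T R Y N)
    (U : Finset (Fin k)) (c : Fin k → ℝ) (hc : ∀ j, j ∉ U → c j = 0) (y : Fin n → Fin 2)
    (hy : ∀ i, rowS c (N i) = sg (y i)) :
    ∃ j ∈ U, (∀ i, sg (y i) = sg (N i j)) ∨ (∀ i, sg (y i) = - sg (N i j)) := by
  classical
  set col : Fin k → (Fin n → ℝ) := fun j i => sg (N i j) with hcol
  have hrow : ∀ (c : Fin k → ℝ) (i : Fin n), rowS c (N i) = (∑ j, c j • col j) i := by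
    intro c i; simp [rowS, hcol, Finset.sum_apply]
  obtain ⟨b, hbU, -, hspan, hli⟩ := exists_linearIndepOn_extension (K := ℝ) (v := col)
    (linearIndepOn_empty ℝ col) (Set.empty_subset (U : Set (Fin k)))
  have hymem : (fun i => sg (y i)) ∈ Submodule.span ℝ (col '' b) := by
    have : (fun i => sg (y i)) = ∑ j, c j • col j := by
      funext i; rw [← hrow, hy]
    rw [this]
    refine Submodule.sum_mem _ fun j _ => ?_
    by_cases hj : j ∈ U
    · exact Submodule.smul_mem _ _ (hspan ⟨j, hj, rfl⟩)
    · rw [hc j hj, zero_smul]; exact Submodule.zero_mem _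
  rw [Set.image_eq_range, Submodule.mem_span_range_iff_exists_fun] at hymem
  obtain ⟨g, hg⟩ := hymem
  set c' : Fin k → ℝ := fun j => if h : j ∈ b then g ⟨j, h⟩ else 0 with hc'
  have hsumb : ∀ e : Fin k → ℝ, (∀ j, j ∉ b → e j = 0) →
      ∑ j, e j • col j = ∑ j : b, e j.1 • col j.1 := by
    intro e he
    rw [← Finset.sum_subtype (Finset.univ.filter fun j => j ∈ b) (by simp) (fun j => e j • col j)]
    symm
    refine Finset.sum_subset (Finset.subset_univ _) fun j _ hj => ?_
    rw [he j (by simpa using hj), zero_smul]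
  have hc'b : ∀ j, j ∉ b → c' j = 0 := fun j hj => by simp [hc', hj]
  have hc'y : ∀ i, rowS c' (N i) = sg (y i) := by
    intro i
    rw [hrow, hsumb c' hc'b]
    have h5 : (∑ j : b, c' j.1 • col j.1) = fun i => sg (y i) := by
      rw [← hg]
      exact Finset.sum_congr rfl fun j _ => by simp [hc']
    rw [h5]
  set T : Finset (Fin k) := Finset.univ.filter fun j => c' j ≠ 0 with hT
  have hTmem : ∀ j, c' j ≠ 0 ↔ j ∈ T := fun j => by simp [hT]
  have hTb : ∀ j ∈ T, j ∈ b := by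
    intro j hj
    by_contra h
    exact (hTmem j).2 hj (hc'b j h)
  rcases lt_or_ge T.card 2 with hlt | hge
  · rcases Nat.lt_succ_iff_lt_or_eq.1 hlt with h0 | h1
    · exfalso
      have hTe : T = ∅ := Finset.card_eq_zero.1 (by omega)
      have : ∀ j, c' j = 0 := by
        intro j; by_contra h; simpa [hTe] using (hTmem j).1 h
      have h2 := hc'y ⟨0, hn⟩
      simp only [rowS, this, zero_mul, Finset.sum_const_zero] at h2
      exact sg_ne_zero _ h2.symm
    · obtain ⟨j, hj⟩ := Finset.card_eq_one.1 h1
      have hjT : j ∈ T := by rw [hj]; exact Finset.mem_singleton_self j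
      have hval : ∀ i, sg (y i) = c' j * sg (N i j) := by
        intro i
        rw [← hc'y]
        unfold rowS
        refine Finset.sum_eq_single j (fun l _ hl => ?_) (by simp)
        have : c' l = 0 := by
          by_contra h
          have := (hTmem l).1 h
          rw [hj, Finset.mem_singleton] at this
          exact hl this
        rw [this, zero_mul]
      have hcj : c' j = 1 ∨ c' j = -1 := by
        have h2 := hval ⟨0, hn⟩
        rcases sg_cases (y ⟨0, hn⟩) with h | h <;> rcases sg_cases (N ⟨0, hn⟩ j) with h' | h' <;>
          rw [h, h'] at h2 <;> [left; right; right; left] <;> linarith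
      refine ⟨j, hbU (hTb j hjT), ?_⟩
      rcases hcj with h | h
      · left; intro i; rw [hval, h, one_mul]
      · right; intro i; rw [hval, h]; ring
  · exfalso
    have hTi : ∀ e : Fin k → ℝ, (∀ j, j ∉ T → e j = 0) → (∀ i, rowS e (N i) = 0) → e = 0 := by
      intro e he he0
      have heb : ∀ j, j ∉ b → e j = 0 := fun j hj => he j fun h => hj (hTb j h)
      have hz : ∑ j : b, e j.1 • col j.1 = 0 := by
        rw [← hsumb e heb]
        funext i; rw [← hrow, he0]; rfl
      have := Fintype.linearIndependent_iff.1 hli (fun j => e j.1) hz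
      funext j
      by_cases hj : j ∈ b
      · exact this ⟨j, hj⟩
      · exact heb j hj
    have hTn : T.card ≤ n := (Finset.card_le_univ T).trans (by simpa using hkn)
    obtain ⟨R, hRc, hR⟩ := exists_rows N T hTn hTi
    refine hno T R (R.filter fun i => rowS c' (N i) = 1) hge hRc (Finset.filter_subset _ _)
      ⟨c', hTmem, fun i => ?_, fun i hi => ?_, fun e he1 he2 => ?_⟩
    · rw [hc'y]; exact sg_cases _
    · simp [hi]
    · have := hR (e - c') (fun j hj => ?_) (fun i hi => ?_)
      · exact sub_eq_zero.1 this
      · have h3 : c' j = 0 := by by_contra h; exact hj ((hTmem j).1 h)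
        simp [h3, he1 j hj]
      · rw [rowS_sub, he2 i hi, sub_self]

/-- Two columns agree up to sign. -/
def PairEv {n k : ℕ} (a b : Fin k) (N : Fin n → Fin k → Fin 2) : Prop :=
  (∀ i, sg (N i a) = sg (N i b)) ∨ (∀ i, sg (N i a) = - sg (N i b))

lemma good_of_no_bad {n k : ℕ} (hn : 0 < n) (hkn : k ≤ n) (N : Fin n → Fin k → Fin 2)
    (hno : ∀ (T : Finset (Fin k)) (R Y : Finset (Fin n)), 2 ≤ T.card → R.card = T.card → Y ⊆ R →
      ¬ BadEv T R Y N) (hpair : ∀ a b : Fin k, a ≠ b → ¬ PairEv a b N) : GoodMat N := by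
  classical
  constructor
  · intro c hc
    by_contra hne
    obtain ⟨a, ha⟩ := Function.ne_iff.1 hne
    simp only [Pi.zero_apply] at ha
    obtain ⟨b, hb, hab⟩ := span_of_no_bad hn hkn N hno (Finset.univ.erase a)
      (fun j => if j = a then 0 else - c j / c a) (fun j hj => by
        have : j = a := by simpa using hj
        simp [this]) (fun i => N i a) (fun i => by
        have h1 := hc i
        rw [← Finset.add_sum_erase _ _ (Finset.mem_univ a)] at h1
        unfold rowS
        rw [← Finset.add_sum_erase _ _ (Finset.mem_univ a)]
        simp only [if_true, zero_mul, zero_add]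
        have h2 : ∑ j ∈ Finset.univ.erase a, (if j = a then 0 else - c j / c a) * sg (N i j) =
            (-1 / c a) * ∑ j ∈ Finset.univ.erase a, c j * sg (N i j) := by
          rw [Finset.mul_sum]
          refine Finset.sum_congr rfl fun j hj => ?_
          rw [if_neg (Finset.mem_erase.1 hj).1]; ring
        rw [h2]
        have h3 : ∑ j ∈ Finset.univ.erase a, c j * sg (N i j) = - (c a * sg (N i a)) := by linarith
        rw [h3]; field_simp)
    exact hpair a b (Finset.mem_erase.1 hb).1.symm hab
  · intro c y hy
    obtain ⟨j, -, hj⟩ := span_of_no_bad hn hkn N hno Finset.univ c (by simp) y hy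
    exact ⟨j, hj⟩

open Classical in
lemma card_PairEv_le {n k : ℕ} (a b : Fin k) (hab : a ≠ b) :
    (Finset.univ.filter fun N : Fin n → Fin k → Fin 2 => PairEv a b N).card ≤
      2 * (3 * 2 ^ (k - 2)) ^ n := by
  have hsplit : (Finset.univ.filter fun N : Fin n → Fin k → Fin 2 => PairEv a b N) ⊆
      (Finset.univ.filter fun N : Fin n → Fin k → Fin 2 => ∀ i, sg (N i a) = sg (N i b)) ∪
      (Finset.univ.filter fun N : Fin n → Fin k → Fin 2 => ∀ i, sg (N i a) = - sg (N i b)) := by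
    intro N hN
    rw [Finset.mem_union, Finset.mem_filter, Finset.mem_filter]
    exact (Finset.mem_filter.1 hN).2.imp (fun h => ⟨Finset.mem_univ _, h⟩)
      (fun h => ⟨Finset.mem_univ _, h⟩)
  refine (Finset.card_le_card hsplit).trans ?_
  rw [two_mul]
  have hval : ∀ (t : ℝ) (r : Fin k → Fin 2),
      rowS (fun j => (if j = a then 1 / 2 else 0) + (if j = b then t else 0)) r =
        1 / 2 * sg (r a) + t * sg (r b) := by
    intro t r
    simp [rowS, add_mul, Finset.sum_add_distrib]
  have main : ∀ (t : ℝ), t ≠ 0 → ∀ P : (Fin k → Fin 2) → Prop,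
      (∀ r, P r → 1 / 2 * sg (r a) + t * sg (r b) = 1 ∨ 1 / 2 * sg (r a) + t * sg (r b) = -1) →
      (Finset.univ.filter fun N : Fin n → Fin k → Fin 2 => ∀ i, P (N i)).card ≤
        (3 * 2 ^ (k - 2)) ^ n := by
    intro t ht P hP
    have hs := signRows_card_le_three
      (fun j => (if j = a then 1 / 2 else 0) + (if j = b then t else 0)) a b hab
      (by simp [hab]) (by simp [hab.symm, ht])
    have hsub : (Finset.univ.filter fun N : Fin n → Fin k → Fin 2 => ∀ i, P (N i)) ⊆
        Fintype.piFinset fun _ : Fin n =>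
          signRows (fun j => (if j = a then 1 / 2 else 0) + (if j = b then t else 0)) := by
      intro N hN
      rw [Fintype.mem_piFinset]
      intro i
      rw [signRows, Finset.mem_filter, hval]
      exact ⟨Finset.mem_univ _, hP _ ((Finset.mem_filter.1 hN).2 i)⟩
    refine (Finset.card_le_card hsub).trans ?_
    rw [Fintype.card_piFinset]
    simp only [Finset.prod_const, Finset.card_univ, Fintype.card_fin]
    exact Nat.pow_le_pow_left hs n
  refine (Finset.card_union_le _ _).trans (Nat.add_le_add ?_ ?_)
  · refine main (1 / 2) (by norm_num) (fun r => sg (r a) = sg (r b)) fun r hr => ?_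
    rw [hr]
    rcases sg_cases (r b) with h | h <;> rw [h] <;> norm_num
  · refine main (-1 / 2) (by norm_num) (fun r => sg (r a) = - sg (r b)) fun r hr => ?_
    rw [hr]
    rcases sg_cases (r b) with h | h <;> rw [h] <;> norm_num

open Classical in
lemma card_not_good_le {n k : ℕ} (hn : 0 < n) (hkn : k ≤ n) (m : ℕ → ℕ)
    (hm : ∀ c : Fin k → ℝ, ∀ T : Finset (Fin k), 2 ≤ T.card → (∀ j, c j ≠ 0 ↔ j ∈ T) →
      (signRows c).card ≤ m T.card) :
    (Finset.univ.filter fun N : Fin n → Fin k → Fin 2 => ¬ GoodMat N).card ≤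
      k * k * (2 * (3 * 2 ^ (k - 2)) ^ n) +
      ∑ s ∈ Finset.Icc 2 k, k.choose s * (n.choose s * (2 ^ s * (m s ^ (n - s) * (2 ^ k) ^ s))) := by
  have hsub : (Finset.univ.filter fun N : Fin n → Fin k → Fin 2 => ¬ GoodMat N) ⊆
      ((Finset.univ.filter fun p : Fin k × Fin k => p.1 ≠ p.2).biUnion fun p =>
        Finset.univ.filter fun N : Fin n → Fin k → Fin 2 => PairEv p.1 p.2 N) ∪
      ((Finset.Icc 2 k).biUnion fun s =>
        (Finset.powersetCard s (Finset.univ : Finset (Fin k))).biUnion fun T =>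
        (Finset.powersetCard s (Finset.univ : Finset (Fin n))).biUnion fun R =>
        R.powerset.biUnion fun Y =>
          Finset.univ.filter fun N : Fin n → Fin k → Fin 2 => BadEv T R Y N) := by
    intro N hN
    have hbad := (Finset.mem_filter.1 hN).2
    by_contra hnot
    rw [Finset.mem_union, not_or] at hnot
    apply hbad
    refine good_of_no_bad hn hkn N ?_ ?_
    · intro T R Y hT hR hY hB
      apply hnot.2
      simp only [Finset.mem_biUnion, Finset.mem_filter, Finset.mem_univ, true_and,
        Finset.mem_powersetCard, Finset.subset_univ, Finset.mem_powerset, Finset.mem_Icc]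
      exact ⟨T.card, ⟨hT, (Finset.card_le_univ T).trans (by simp)⟩, T, rfl, R, hR, Y, hY, hB⟩
    · intro a b hab hP
      apply hnot.1
      simp only [Finset.mem_biUnion, Finset.mem_filter, Finset.mem_univ, true_and]
      exact ⟨(a, b), hab, hP⟩
  refine (Finset.card_le_card hsub).trans ((Finset.card_union_le _ _).trans (Nat.add_le_add ?_ ?_))
  · refine (Finset.card_biUnion_le_card_mul _ _ (2 * (3 * 2 ^ (k - 2)) ^ n) ?_).trans ?_
    · intro p hp
      exact card_PairEv_le p.1 p.2 (Finset.mem_filter.1 hp).2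
    · refine Nat.mul_le_mul_right _ ((Finset.card_le_univ _).trans ?_)
      simp
  · refine Finset.card_biUnion_le.trans (Finset.sum_le_sum fun s hs => ?_)
    rw [Finset.mem_Icc] at hs
    refine (Finset.card_biUnion_le_card_mul _ _
      (n.choose s * (2 ^ s * (m s ^ (n - s) * (2 ^ k) ^ s))) ?_).trans (by simp)
    intro T hT
    have hTs : T.card = s := (Finset.mem_powersetCard.1 hT).2
    refine (Finset.card_biUnion_le_card_mul _ _ (2 ^ s * (m s ^ (n - s) * (2 ^ k) ^ s)) ?_).trans
      (by simp)
    intro R hR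
    have hRs : R.card = s := (Finset.mem_powersetCard.1 hR).2
    refine (Finset.card_biUnion_le_card_mul _ _ (m s ^ (n - s) * (2 ^ k) ^ s) ?_).trans
      (by rw [Finset.card_powerset, hRs])
    intro Y _
    have := card_BadEv_le (n := n) T R Y (m s) (fun c hc => by
      rw [← hTs]; exact hm c T (by omega) hc)
    rwa [hRs] at this

lemma centralBinom_sq_le (m : ℕ) : m.centralBinom ^ 2 * (2 * m + 1) ≤ 16 ^ m := by
  induction m with
  | zero => simp
  | succ m ih =>
    have h := Nat.succ_mul_centralBinom_succ m
    have h2 : (m + 1) ^ 2 * ((m + 1).centralBinom ^ 2 * (2 * (m + 1) + 1)) ≤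
        (m + 1) ^ 2 * 16 ^ (m + 1) := by
      calc (m + 1) ^ 2 * ((m + 1).centralBinom ^ 2 * (2 * (m + 1) + 1))
          = ((m + 1) * (m + 1).centralBinom) ^ 2 * (2 * m + 3) := by ring
        _ = (m.centralBinom ^ 2 * (2 * m + 1)) * (4 * ((2 * m + 1) * (2 * m + 3))) := by
            rw [h]; ring
        _ ≤ 16 ^ m * (4 * (4 * (m + 1) ^ 2)) := by
            refine Nat.mul_le_mul ih (Nat.mul_le_mul_left _ ?_)
            nlinarith
        _ = (m + 1) ^ 2 * 16 ^ (m + 1) := by ring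
    exact Nat.le_of_mul_le_mul_left h2 (by positivity)

lemma choose_half_sq_le (s : ℕ) : (s.choose (s / 2)) ^ 2 * (s + 1) ≤ 4 ^ s := by
  obtain ⟨m, rfl | rfl⟩ := Nat.even_or_odd' s
  · have := centralBinom_sq_le m
    rw [Nat.centralBinom_eq_two_mul_choose] at this
    rw [Nat.mul_div_cancel_left m (by norm_num), pow_mul]
    exact this
  · have h := centralBinom_sq_le (m + 1)
    have h1 : (m + 1).centralBinom = 2 * (2 * m + 1).choose m := by
      rw [Nat.centralBinom_eq_two_mul_choose, show 2 * (m + 1) = (2 * m + 1) + 1 by ring,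
        Nat.choose_succ_succ, Nat.choose_symm_half]
      ring
    have h2 : (2 * m + 1) / 2 = m := by omega
    rw [h2]
    rw [h1] at h
    have h3 : (16 : ℕ) ^ (m + 1) = 4 * 4 ^ (2 * m + 1) := by
      rw [pow_succ 4, pow_mul]; norm_num; ring
    rw [h3] at h
    nlinarith [Nat.zero_le (((2 * m + 1).choose m) ^ 2)]

lemma exists_choose_half_le (δ : ℝ) (hδ : 0 < δ) :
    ∃ s0 : ℕ, ∀ s ≥ s0, (s.choose (s / 2) : ℝ) ≤ δ * 2 ^ s := by
  obtain ⟨s0, hs0⟩ := exists_nat_gt (1 / δ ^ 2)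
  refine ⟨s0, fun s hs => ?_⟩
  have h1 : ((s.choose (s / 2) : ℝ)) ^ 2 * (s + 1) ≤ 4 ^ s := by exact_mod_cast choose_half_sq_le s
  have h2 : (1 : ℝ) / δ ^ 2 ≤ s + 1 := by
    have : (s0 : ℝ) ≤ s := by exact_mod_cast hs
    linarith
  have hδ2 : 0 < δ ^ 2 := by positivity
  rw [div_le_iff₀ hδ2] at h2
  refine le_of_sq_le_sq ?_ (by positivity)
  have h3 : (δ * 2 ^ s) ^ 2 = δ ^ 2 * 4 ^ s := by
    rw [mul_pow, ← pow_mul, mul_comm s 2, pow_mul]; norm_num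
  rw [h3]
  have h4 : (0 : ℝ) ≤ (s.choose (s / 2) : ℝ) ^ 2 := by positivity
  calc (s.choose (s / 2) : ℝ) ^ 2 ≤ (s.choose (s / 2) : ℝ) ^ 2 * ((s + 1) * δ ^ 2) :=
        le_mul_of_one_le_right h4 h2
    _ = δ ^ 2 * ((s.choose (s / 2) : ℝ) ^ 2 * (s + 1)) := by ring
    _ ≤ δ ^ 2 * 4 ^ s := mul_le_mul_of_nonneg_left h1 hδ2.le

lemma three_pow_cast {k : ℕ} (hk : 2 ≤ k) : ((3 * 2 ^ (k - 2) : ℕ) : ℝ) = 3 / 4 * 2 ^ k := by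
  obtain ⟨l, rfl⟩ := Nat.exists_eq_add_of_le hk
  have : 2 + l - 2 = l := by omega
  rw [this, pow_add]; push_cast; ring

lemma eventually_error_small (s0 : ℕ) : ∀ᶠ n : ℕ in Filter.atTop,
    2 * (n : ℝ) ^ 2 * (3 / 4) ^ n + n * (2 * (n : ℝ) ^ 2) ^ s0 * (3 / 4) ^ (n - s0) + (1 / 2) ^ n
      ≤ 1 / 2 := by
  have t1 : Filter.Tendsto (fun n : ℕ => 2 * ((n : ℝ) ^ 2 * (3 / 4 : ℝ) ^ n)) Filter.atTop
      (nhds (2 * 0)) :=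
    (tendsto_pow_const_mul_const_pow_of_abs_lt_one 2 (by rw [abs_of_pos] <;> norm_num)).const_mul 2
  have t2 : Filter.Tendsto (fun n : ℕ => (2 ^ s0 * (4 / 3) ^ s0) *
      ((n : ℝ) ^ (2 * s0 + 1) * (3 / 4 : ℝ) ^ n)) Filter.atTop
      (nhds ((2 ^ s0 * (4 / 3) ^ s0) * 0)) :=
    (tendsto_pow_const_mul_const_pow_of_abs_lt_one (2 * s0 + 1)
      (by rw [abs_of_pos] <;> norm_num)).const_mul _
  have t3 : Filter.Tendsto (fun n : ℕ => (1 / 2 : ℝ) ^ n) Filter.atTop (nhds 0) :=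
    tendsto_pow_atTop_nhds_zero_of_lt_one (by norm_num) (by norm_num)
  have t := (t1.add t2).add t3
  simp only [mul_zero, add_zero] at t
  filter_upwards [t.eventually_le_const (show (0 : ℝ) < 1 / 2 by norm_num),
    Filter.eventually_ge_atTop s0] with n hn hns
  refine le_trans (le_of_eq ?_) hn
  have h : (3 / 4 : ℝ) ^ n = (3 / 4) ^ (n - s0) * (3 / 4) ^ s0 := by
    rw [← pow_add]; congr 1; omega
  have h2 : (4 / 3 : ℝ) ^ s0 * (3 / 4) ^ s0 = 1 := by rw [← mul_pow]; norm_num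
  have h3 : (2 ^ s0 * (4 / 3) ^ s0) * ((n : ℝ) ^ (2 * s0 + 1) * (3 / 4 : ℝ) ^ n) =
      n * (2 * (n : ℝ) ^ 2) ^ s0 * (3 / 4) ^ (n - s0) := by
    rw [h]
    calc (2 ^ s0 * (4 / 3) ^ s0) * ((n : ℝ) ^ (2 * s0 + 1) * ((3 / 4) ^ (n - s0) * (3 / 4) ^ s0))
        = 2 ^ s0 * ((4 / 3 : ℝ) ^ s0 * (3 / 4) ^ s0) * ((n : ℝ) ^ (2 * s0 + 1) * (3 / 4) ^ (n - s0)) := by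
          ring
      _ = _ := by rw [h2, mul_pow, ← pow_mul]; ring
  rw [h3]; ring

open Classical in
lemma eventually_not_good_le (L : ℕ) (hL : 2 ≤ L) : ∀ᶠ n : ℕ in Filter.atTop,
    ((Finset.univ.filter fun N : Fin n → Fin (n - n / L) → Fin 2 => ¬ GoodMat N).card : ℝ) ≤
      1 / 2 * (2 ^ (n - n / L)) ^ n := by
  set q : ℝ := (1 / 16) ^ (2 * L) with hq
  have hq0 : 0 < q := by positivity
  have hq1 : q ≤ 1 := pow_le_one₀ (by norm_num) (by norm_num)
  obtain ⟨s0, hs0⟩ := exists_choose_half_le (q / 2) (by positivity)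
  filter_upwards [eventually_error_small s0, Filter.eventually_ge_atTop (max 4 L)] with n herr hn
  have hn4 : 4 ≤ n := (le_max_left _ _).trans hn
  have hnL : L ≤ n := (le_max_right _ _).trans hn
  set k := n - n / L with hk
  have hdiv : n / L ≤ n / 2 := Nat.div_le_div_left hL (by norm_num)
  have hk2 : 2 ≤ k := by omega
  have hkn : k ≤ n := Nat.sub_le _ _
  have hnk : n - k = n / L := by
    have : n / L ≤ n := Nat.div_le_self _ _
    omega
  set m : ℕ → ℕ := fun s => if s < s0 then 3 * 2 ^ (k - 2) else
    2 * (s.choose (s / 2) * 2 ^ (k - s)) with hm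
  have hmain := card_not_good_le (n := n) (k := k) (by omega) hkn m (by
    intro c T hT hc
    simp only [hm]
    split_ifs
    · obtain ⟨a, ha, b, hb, hab⟩ := Finset.one_lt_card.1 (show 1 < T.card by omega)
      exact signRows_card_le_three c a b hab ((hc a).2 ha) ((hc b).2 hb)
    · exact signRows_card_le_lo c T hc)
  have hmainR : ((Finset.univ.filter fun N : Fin n → Fin k → Fin 2 => ¬ GoodMat N).card : ℝ) ≤
      k * k * (2 * ((3 * 2 ^ (k - 2) : ℕ) : ℝ) ^ n) +
      ∑ s ∈ Finset.Icc 2 k, (k.choose s : ℝ) * ((n.choose s : ℝ) *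
        (2 ^ s * ((m s : ℝ) ^ (n - s) * (2 ^ k) ^ s))) := by
    exact_mod_cast hmain
  set Q : ℝ := (2 ^ k) ^ n with hQ
  have hQ0 : 0 < Q := by positivity
  have hknR : (k : ℝ) ≤ n := by exact_mod_cast hkn
  have hn1R : (1 : ℝ) ≤ n := by exact_mod_cast (show 1 ≤ n by omega)
  have hpair : (k : ℝ) * k * (2 * ((3 * 2 ^ (k - 2) : ℕ) : ℝ) ^ n) ≤
      (2 * (n : ℝ) ^ 2 * (3 / 4) ^ n) * Q := by
    rw [three_pow_cast hk2, mul_pow]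
    have : (k : ℝ) * k ≤ (n : ℝ) ^ 2 := by
      rw [sq]; exact mul_le_mul hknR hknR (by positivity) (by positivity)
    calc (k : ℝ) * k * (2 * ((3 / 4) ^ n * (2 ^ k) ^ n))
        ≤ (n : ℝ) ^ 2 * (2 * ((3 / 4) ^ n * (2 ^ k) ^ n)) :=
          mul_le_mul_of_nonneg_right this (by positivity)
      _ = _ := by rw [hQ]; ring
  have hqn : q ^ (n - k) ≤ (1 / 16) ^ n := by
    rw [hnk, hq, ← pow_mul]
    refine pow_le_pow_of_le_one (by norm_num) (by norm_num) ?_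
    have h1 : n < L * (n / L) + L := by
      have := Nat.div_add_mod n L
      have := Nat.mod_lt n (show 0 < L by omega)
      omega
    have h2 : 1 ≤ n / L := Nat.div_pos hnL (by omega)
    nlinarith
  have hterm : ∀ s ∈ Finset.Icc 2 k, (k.choose s : ℝ) * ((n.choose s : ℝ) *
        (2 ^ s * ((m s : ℝ) ^ (n - s) * (2 ^ k) ^ s))) ≤
      ((2 * (n : ℝ) ^ 2) ^ s0 * (3 / 4) ^ (n - s0)) * Q +
        (k.choose s : ℝ) * (4 ^ n * (1 / 16) ^ n * Q) := by
    intro s hs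
    rw [Finset.mem_Icc] at hs
    have hQs : ∀ p : ℝ, (p * 2 ^ k) ^ (n - s) * (2 ^ k) ^ s = p ^ (n - s) * Q := by
      intro p
      rw [mul_pow, mul_assoc, ← pow_add, hQ]
      congr 3
      omega
    by_cases hlt : s < s0
    · have hms : (m s : ℝ) = 3 / 4 * 2 ^ k := by
        simp only [hm, if_pos hlt]; exact three_pow_cast hk2
      rw [hms, hQs]
      have e1 : (k.choose s : ℝ) ≤ (n : ℝ) ^ s := by
        have : k.choose s ≤ n ^ s := (Nat.choose_le_pow k s).trans (Nat.pow_le_pow_left hkn s)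
        exact_mod_cast this
      have e2 : (n.choose s : ℝ) ≤ (n : ℝ) ^ s := by exact_mod_cast Nat.choose_le_pow n s
      have e3 : (3 / 4 : ℝ) ^ (n - s) ≤ (3 / 4) ^ (n - s0) :=
        pow_le_pow_of_le_one (by norm_num) (by norm_num) (by omega)
      have e4 : (2 * (n : ℝ) ^ 2) ^ s ≤ (2 * (n : ℝ) ^ 2) ^ s0 :=
        pow_le_pow_right₀ (by nlinarith) hlt.le
      have e5 : (0 : ℝ) ≤ (k.choose s : ℝ) * (4 ^ n * (1 / 16) ^ n * Q) := by positivity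
      refine le_add_of_le_of_nonneg ?_ e5
      calc (k.choose s : ℝ) * ((n.choose s : ℝ) * (2 ^ s * ((3 / 4) ^ (n - s) * Q)))
          ≤ (n : ℝ) ^ s * ((n : ℝ) ^ s * (2 ^ s * ((3 / 4) ^ (n - s0) * Q))) := by gcongr
        _ = ((2 * (n : ℝ) ^ 2) ^ s * (3 / 4) ^ (n - s0)) * Q := by
            rw [mul_pow, ← pow_mul]; ring
        _ ≤ _ := by gcongr
    · have hms : (m s : ℝ) ≤ q * 2 ^ k := by
        simp only [hm, if_neg hlt]
        push_cast
        have h6 := hs0 s (not_lt.1 hlt)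
        have h7 : (2 : ℝ) ^ k = 2 ^ s * 2 ^ (k - s) := by rw [← pow_add]; congr 1; omega
        rw [h7]
        calc (2 : ℝ) * ((s.choose (s / 2) : ℝ) * 2 ^ (k - s))
            ≤ 2 * (q / 2 * 2 ^ s * 2 ^ (k - s)) := by gcongr
          _ = _ := by ring
      have e0 : (m s : ℝ) ^ (n - s) * (2 ^ k) ^ s ≤ (1 / 16) ^ n * Q := by
        calc (m s : ℝ) ^ (n - s) * (2 ^ k) ^ s ≤ (q * 2 ^ k) ^ (n - s) * (2 ^ k) ^ s := by gcongr
          _ = q ^ (n - s) * Q := hQs q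
          _ ≤ q ^ (n - k) * Q := by
              refine mul_le_mul_of_nonneg_right (pow_le_pow_of_le_one hq0.le hq1 ?_) hQ0.le
              omega
          _ ≤ _ := mul_le_mul_of_nonneg_right hqn hQ0.le
      have e1 : (n.choose s : ℝ) ≤ 2 ^ n := by exact_mod_cast Nat.choose_le_two_pow n s
      have e2 : (2 : ℝ) ^ s ≤ 2 ^ n := pow_le_pow_right₀ (by norm_num) (by omega)
      have e5 : (0 : ℝ) ≤ ((2 * (n : ℝ) ^ 2) ^ s0 * (3 / 4) ^ (n - s0)) * Q := by positivity
      refine le_add_of_nonneg_of_le e5 ?_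
      refine mul_le_mul_of_nonneg_left ?_ (by positivity)
      have h4 : (4 : ℝ) ^ n = 2 ^ n * 2 ^ n := by rw [← mul_pow]; norm_num
      calc (n.choose s : ℝ) * (2 ^ s * ((m s : ℝ) ^ (n - s) * (2 ^ k) ^ s))
          ≤ 2 ^ n * (2 ^ n * ((1 / 16) ^ n * Q)) := by gcongr
        _ = _ := by rw [h4]; ring
  have hsum := Finset.sum_le_sum hterm
  rw [Finset.sum_add_distrib, Finset.sum_const, ← Finset.sum_mul, nsmul_eq_mul] at hsum
  have hc1 : ((Finset.Icc 2 k).card : ℝ) ≤ n := by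
    have : (Finset.Icc 2 k).card ≤ n := by rw [Nat.card_Icc]; omega
    exact_mod_cast this
  have hc2 : ∑ s ∈ Finset.Icc 2 k, (k.choose s : ℝ) ≤ 2 ^ n := by
    have h8 : ∑ s ∈ Finset.Icc 2 k, k.choose s ≤ 2 ^ k := by
      rw [← Nat.sum_range_choose]
      refine Finset.sum_le_sum_of_subset fun s hs => ?_
      rw [Finset.mem_Icc] at hs
      rw [Finset.mem_range]; omega
    have h9 : ∑ s ∈ Finset.Icc 2 k, k.choose s ≤ 2 ^ n :=
      h8.trans (Nat.pow_le_pow_right (by norm_num) hkn)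
    exact_mod_cast h9
  have h16 : (2 : ℝ) ^ n * (4 ^ n * (1 / 16) ^ n * Q) = (1 / 2) ^ n * Q := by
    rw [← mul_assoc, ← mul_pow, ← mul_pow]; norm_num
  calc _ ≤ _ := hmainR
    _ ≤ (2 * (n : ℝ) ^ 2 * (3 / 4) ^ n) * Q +
        (n * (((2 * (n : ℝ) ^ 2) ^ s0 * (3 / 4) ^ (n - s0)) * Q) +
          2 ^ n * (4 ^ n * (1 / 16) ^ n * Q)) := by
        refine add_le_add hpair (hsum.trans (add_le_add ?_ ?_)) <;> gcongr
    _ = (2 * (n : ℝ) ^ 2 * (3 / 4) ^ n + n * (2 * (n : ℝ) ^ 2) ^ s0 * (3 / 4) ^ (n - s0) +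
          (1 / 2) ^ n) * Q := by rw [h16]; ring
    _ ≤ 1 / 2 * Q := mul_le_mul_of_nonneg_right herr hQ0.le

lemma eventually_M_lower (L : ℕ) (hL : 2 ≤ L) : ∀ᶠ n : ℕ in Filter.atTop,
    2 ^ ((n - n / L) * n) ≤ 2 * ((n + 1) ^ (n + 1) * ((n + 1) ^ (n + 1) * 2 ^ (n + 1))) * M (n + 1) := by
  classical
  filter_upwards [eventually_not_good_le L hL] with n hn
  set k := n - n / L with hk
  have hkn : k ≤ n := Nat.sub_le _ _
  have htot : (Finset.univ.filter fun N : Fin n → Fin k → Fin 2 => GoodMat N).card +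
      (Finset.univ.filter fun N : Fin n → Fin k → Fin 2 => ¬ GoodMat N).card = (2 ^ k) ^ n := by
    rw [Finset.card_filter_add_card_filter_not]
    simp
  have htotR : ((Finset.univ.filter fun N : Fin n → Fin k → Fin 2 => GoodMat N).card : ℝ) +
      ((Finset.univ.filter fun N : Fin n → Fin k → Fin 2 => ¬ GoodMat N).card : ℝ) = (2 ^ k) ^ n := by
    exact_mod_cast htot
  have hgood : (2 ^ k) ^ n ≤ 2 * (Finset.univ.filter fun N : Fin n → Fin k → Fin 2 => GoodMat N).card := by
    have : ((2 : ℝ) ^ k) ^ n ≤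
        2 * ((Finset.univ.filter fun N : Fin n → Fin k → Fin 2 => GoodMat N).card : ℝ) := by
      linarith
    exact_mod_cast this
  rw [pow_mul]
  have hkk : k ^ k ≤ (n + 1) ^ (n + 1) :=
    (Nat.pow_le_pow_left (by omega) k).trans (Nat.pow_le_pow_right (by omega) (by omega))
  have hfac : (n + 1).factorial ≤ (n + 1) ^ (n + 1) := Nat.factorial_le_pow _
  calc (2 ^ k) ^ n ≤ 2 * _ := hgood
    _ ≤ 2 * (k ^ k * (((n + 1).factorial * 2 ^ (n + 1)) * M (n + 1))) :=
        Nat.mul_le_mul_left _ ((card_good_le n k).trans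
          (Nat.mul_le_mul_left _ (card_extremal_le_mul_M (n + 1))))
    _ ≤ 2 * ((n + 1) ^ (n + 1) * (((n + 1) ^ (n + 1) * 2 ^ (n + 1)) * M (n + 1))) := by gcongr
    _ = _ := by ring

lemma eventually_logb_lower (L : ℕ) (hL : 2 ≤ L) : ∀ᶠ d : ℕ in Filter.atTop,
    (1 - 1 / (L : ℝ)) * (1 - 1 / (d : ℝ)) ^ 2 - (1 / (d : ℝ)) ^ 2 - 1 / (d : ℝ)
      - 2 * (Real.logb 2 d / d) ≤ Real.logb 2 (M d) / (d : ℝ) ^ 2 := by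
  have h := eventually_M_lower L hL
  rw [← Filter.map_add_atTop_eq_nat 1, Filter.eventually_map]
  filter_upwards [h] with n hn
  set d := n + 1 with hd
  have hd0 : (0 : ℝ) < d := by rw [hd]; positivity
  have hMpos : 0 < M d := by
    rcases Nat.eq_zero_or_pos (M d) with h0 | h0
    · rw [h0, mul_zero] at hn
      exact absurd hn (by simp)
    · exact h0
  have hMR : (0 : ℝ) < M d := by exact_mod_cast hMpos
  have hR : (2 : ℝ) ^ ((n - n / L) * n) ≤ 2 * ((d : ℝ) ^ d * ((d : ℝ) ^ d * 2 ^ d)) * M d := by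
    exact_mod_cast hn
  have hlog := Real.logb_le_logb_of_le (b := 2) (by norm_num) (by positivity) hR
  rw [Real.logb_mul (by positivity) (by positivity), Real.logb_mul (by positivity) (by positivity),
    Real.logb_mul (by positivity) (by positivity), Real.logb_mul (by positivity) (by positivity),
    Real.logb_pow, Real.logb_pow, Real.logb_pow, Real.logb_self_eq_one (by norm_num)] at hlog
  push_cast at hlog
  have hkR : (1 - 1 / (L : ℝ)) * n ≤ ((n - n / L : ℕ) : ℝ) := by
    rw [Nat.cast_sub (Nat.div_le_self _ _)]
    have := Nat.cast_div_le (α := ℝ) (m := n) (n := L)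
    have h2 : (1 - 1 / (L : ℝ)) * n = n - n / L := by ring
    rw [h2]; linarith
  have hnR : (n : ℝ) = d - 1 := by rw [hd]; push_cast; ring
  have hn0 : (0 : ℝ) ≤ n := by positivity
  have hfin : (1 - 1 / (L : ℝ)) * (d - 1) ^ 2 - 1 - d - 2 * (d * Real.logb 2 d) ≤
      Real.logb 2 (M d) := by
    have h3 := mul_le_mul_of_nonneg_right hkR hn0
    rw [← hnR]
    nlinarith
  rw [le_div_iff₀ (by positivity)]
  refine le_trans (le_of_eq ?_) hfin
  field_simp

/-- log₂ M(d,2) = d²(1 + o(1)) as d → ∞. -/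
theorem stmt_12 :
    Filter.Tendsto (fun d : ℕ => Real.logb 2 (M d) / (d : ℝ) ^ 2)
      Filter.atTop (nhds 1) := by
  have hinv : Filter.Tendsto (fun d : ℕ => 1 / (d : ℝ)) Filter.atTop (nhds 0) :=
    tendsto_one_div_atTop_nhds_zero_nat
  have hlogR : Filter.Tendsto (fun x : ℝ => Real.logb 2 x / x) Filter.atTop (nhds 0) := by
    have h1 := (Real.isLittleO_log_id_atTop.tendsto_div_nhds_zero).div_const (Real.log 2)
    rw [zero_div] at h1
    refine h1.congr fun x => ?_
    simp only [Real.logb, id]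
    rw [div_right_comm]
  have hlog : Filter.Tendsto (fun d : ℕ => Real.logb 2 (d : ℝ) / d) Filter.atTop (nhds 0) :=
    hlogR.comp tendsto_natCast_atTop_atTop
  rw [tendsto_order]
  constructor
  · intro a ha
    obtain ⟨L0, hL0⟩ := exists_nat_gt (1 / (1 - a))
    set L := max 2 L0 with hL
    have hL2 : 2 ≤ L := le_max_left _ _
    have hLpos : (0 : ℝ) < L := by
      have : 0 < L := by omega
      exact_mod_cast this
    have ha1 : 0 < 1 - a := by linarith
    have haL : a < 1 - 1 / (L : ℝ) := by
      have h1 : (L0 : ℝ) ≤ L := by exact_mod_cast le_max_right 2 L0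
      have h2 : 1 / (1 - a) < L := lt_of_lt_of_le hL0 h1
      rw [div_lt_iff₀ ha1] at h2
      have h3 : 1 / (L : ℝ) < 1 - a := by
        rw [div_lt_iff₀ hLpos]; linarith
      linarith
    have ht : Filter.Tendsto (fun d : ℕ => (1 - 1 / (L : ℝ)) * (1 - 1 / (d : ℝ)) ^ 2
        - (1 / (d : ℝ)) ^ 2 - 1 / (d : ℝ) - 2 * (Real.logb 2 d / d)) Filter.atTop
        (nhds ((1 - 1 / (L : ℝ)) * (1 - 0) ^ 2 - 0 ^ 2 - 0 - 2 * 0)) :=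
      ((((hinv.const_sub 1).pow 2).const_mul _).sub (hinv.pow 2)).sub hinv |>.sub
        (hlog.const_mul 2)
    have hlim : (1 - 1 / (L : ℝ)) * (1 - 0) ^ 2 - 0 ^ 2 - 0 - 2 * 0 = 1 - 1 / (L : ℝ) := by ring
    rw [hlim] at ht
    filter_upwards [eventually_logb_lower L hL2, ht.eventually_const_lt haL] with d h1 h2
    exact h2.trans_le h1
  · intro a ha
    have ht : Filter.Tendsto (fun d : ℕ => 1 + 2 * (Real.logb 2 d / d)) Filter.atTop
        (nhds (1 + 2 * 0)) := (hlog.const_mul 2).const_add 1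
    rw [mul_zero, add_zero] at ht
    filter_upwards [ht.eventually_lt_const ha, Filter.eventually_ge_atTop 2] with d h1 hd
    refine lt_of_le_of_lt ?_ h1
    have hdR : (2 : ℝ) ≤ d := by exact_mod_cast hd
    have hd0 : (0 : ℝ) < d := by linarith
    have hlog0 : 0 ≤ Real.logb 2 d := Real.logb_nonneg (by norm_num) (by linarith)
    rcases Nat.eq_zero_or_pos (M d) with h0 | h0
    · rw [h0]; simp; positivity
    have hMR : (0 : ℝ) < M d := by exact_mod_cast h0
    have hM : M d ≤ (d * d) * 2 ^ (d * d) :=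
      ((M_le_card_extremal d).trans (card_extremal_le (by omega))).trans
        (Nat.mul_le_mul_right _ (by nlinarith))
    have hM' : (M d : ℝ) ≤ ((d : ℝ) * d) * 2 ^ (d * d) := by exact_mod_cast hM
    have h2 := Real.logb_le_logb_of_le (b := 2) (by norm_num) hMR hM'
    rw [Real.logb_mul (by positivity) (by positivity), Real.logb_mul (by positivity) (by positivity),
      Real.logb_pow, Real.logb_self_eq_one (by norm_num)] at h2
    push_cast at h2
    rw [div_le_iff₀ (by positivity)]
    have h3 : (1 + 2 * (Real.logb 2 d / d)) * (d : ℝ) ^ 2 = d ^ 2 + 2 * d * Real.logb 2 d := by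
      field_simp
    rw [h3]
    nlinarith
end

section
/- A 2-dimensional (0,1)-matrix A of order n is a threshold matrix if and only if A is equivalent to some stepped matrix. -/
open Finset

/-- A 2-dimensional matrix is stepped if the supports of its rows and of its columns are
nested decreasingly. -/
def Stepped {n : ℕ} (A : (Fin 2 → Fin n) → Bool) : Prop :=
  (∀ i i' j : Fin n, i ≤ i' → A ![i', j] = true → A ![i, j] = true) ∧
  (∀ i j j' : Fin n, j ≤ j' → A ![i, j'] = true → A ![i, j] = true)

theorem stepped_threshold {n : ℕ} (B : (Fin 2 → Fin n) → Bool) (h : Stepped B) :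
    IsThreshold B := by
  classical
  have key : ∀ i j : Fin n, B ![i, j] = true ↔
      j.val + 1 ≤ (Finset.univ.filter (fun k : Fin n => B ![i, k] = true)).card := by
    intro i j
    constructor
    · intro hj
      have hs : Finset.Iic j ⊆ Finset.univ.filter (fun k : Fin n => B ![i, k] = true) := by
        intro k hk
        simp only [Finset.mem_filter, Finset.mem_univ, true_and]
        exact h.2 i k j (Finset.mem_Iic.1 hk) hj
      have := Finset.card_le_card hs
      simpa using this
    · intro hc
      by_contra hj
      have hs : Finset.univ.filter (fun k : Fin n => B ![i, k] = true) ⊆ Finset.Iio j := by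
        intro k hk
        simp only [Finset.mem_filter, Finset.mem_univ, true_and] at hk
        rw [Finset.mem_Iio]
        by_contra hlt
        exact hj (h.2 i j k (not_lt.1 hlt) hk)
      have := Finset.card_le_card hs
      rw [Fin.card_Iio] at this
      omega
  refine ⟨![fun i => ((Finset.univ.filter (fun k : Fin n => B ![i, k] = true)).card : ℝ) / n,
    fun j => 1 - ((j.val : ℝ) + 1) / n], ?_, ?_⟩
  · intro i j
    have hn : (0 : ℝ) < n := by exact_mod_cast j.pos
    fin_cases i
    · exact div_nonneg (Nat.cast_nonneg _) hn.le
    · change (0 : ℝ) ≤ 1 - ((j.val : ℝ) + 1) / n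
      rw [sub_nonneg, div_le_one hn]
      exact_mod_cast j.isLt
  · intro α
    have hα : α = ![α 0, α 1] := by
      ext i; fin_cases i <;> rfl
    have hn : (0 : ℝ) < n := by exact_mod_cast (α 0).pos
    conv_lhs => rw [hα]
    rw [key, Fin.sum_univ_two]
    simp only [Matrix.cons_val_zero, Matrix.cons_val_one, Matrix.cons_val_fin_one]
    rw [← Nat.cast_le (α := ℝ), ← div_le_div_iff_of_pos_right hn]
    push_cast
    constructor <;> intro <;> linarith

theorem stmt_13 {n : ℕ} (A : (Fin 2 → Fin n) → Bool) :
    IsThreshold A ↔ ∃ B : (Fin 2 → Fin n) → Bool, Stepped B ∧ MatEquiv A B := by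
  constructor
  · rintro ⟨L, -, hL⟩
    let σ : Fin 2 → Equiv.Perm (Fin n) := fun i => Tuple.sort (fun j => - L i j)
    have hσ : ∀ i (a b : Fin n), a ≤ b → L i (σ i b) ≤ L i (σ i a) := by
      intro i a b hab
      have := Tuple.monotone_sort (fun j => - L i j) hab
      simpa using this
    refine ⟨fun α => A (fun j => σ j (α j)), ⟨?_, ?_⟩, 1, σ, fun α => rfl⟩
    · intro i i' j hi
      simp only [hL, Fin.sum_univ_two, Matrix.cons_val_zero, Matrix.cons_val_one,
        Matrix.cons_val_fin_one]
      have := hσ 0 i i' hi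
      intro; linarith
    · intro i j j' hj
      simp only [hL, Fin.sum_univ_two, Matrix.cons_val_zero, Matrix.cons_val_one,
        Matrix.cons_val_fin_one]
      have := hσ 1 j j' hj
      intro; linarith
  · rintro ⟨B, hB, π, σ, hAB⟩
    obtain ⟨L, hL0, hL⟩ := stepped_threshold B hB
    refine ⟨fun j x => L (π.symm j) ((σ (π.symm j)).symm x), fun _ _ => hL0 _ _, ?_⟩
    intro α
    have h1 : B (fun i => (σ i).symm (α (π i))) = A α := by
      rw [hAB]; simp
    rw [← h1, hL, ← Equiv.sum_comp π (fun j => L (π.symm j) ((σ (π.symm j)).symm (α j)))]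
    simp only [Equiv.symm_apply_apply]
end

section
/- For every n ≥ 1, the number of equivalence classes of 2-dimensional threshold (0,1)-matrices of order n is at most the binomial coefficient C(2n, n). -/
open Finset

theorem lowerSet_iff {n : ℕ} (p : Fin n → Bool)
    (hp : ∀ i j, i ≤ j → p j = true → p i = true) (j : Fin n) :
    p j = true ↔ (j : ℕ) < (Finset.univ.filter (fun i => p i = true)).card := by
  constructor
  · intro h
    have hs : Finset.Iic j ⊆ Finset.univ.filter (fun i => p i = true) := by
      intro i hi
      simp only [Finset.mem_Iic] at hi
      simpa using hp i j hi h
    have := Finset.card_le_card hs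
    rw [Fin.card_Iic] at this
    omega
  · intro h
    by_contra hj
    have hs : Finset.univ.filter (fun i => p i = true) ⊆ Finset.Iio j := by
      intro i hi
      simp only [Finset.mem_filter, Finset.mem_univ, true_and] at hi
      simp only [Finset.mem_Iio]
      by_contra hij
      exact hj (hp j i (not_lt.mp hij) hi)
    have := Finset.card_le_card hs
    rw [Fin.card_Iio] at this
    omega

/-- Number of ones in row `i`. -/
def rowCount {n : ℕ} (A : (Fin 2 → Fin n) → Bool) (i : Fin n) : Fin (n + 1) :=
  ⟨(Finset.univ.filter (fun j => A ![i, j] = true)).card, by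
    have := Finset.card_le_univ (Finset.univ.filter (fun j => A ![i, j] = true))
    rw [Fintype.card_fin] at this
    omega⟩

theorem threshold_sorted {n : ℕ} {A : (Fin 2 → Fin n) → Bool} (hA : IsThreshold A) :
    ∃ τ : Equiv.Perm (Fin n), ∀ i j, A ![i, τ j] = true ↔ (j : ℕ) < (rowCount A i : ℕ) := by
  obtain ⟨L, -, hL⟩ := hA
  refine ⟨Tuple.sort (fun j => - L 1 j), fun i j => ?_⟩
  have hm := Tuple.monotone_sort (fun j => - L 1 j)
  set τ := Tuple.sort (fun j => - L 1 j)
  rw [lowerSet_iff (fun j => A ![i, τ j])]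
  · have : (Finset.univ.filter (fun j => A ![i, τ j] = true)).card
        = (Finset.univ.filter (fun j => A ![i, j] = true)).card := by
      apply Finset.card_equiv τ
      intro k
      simp
    rw [this]
    rfl
  · intro a b hab h
    rw [hL] at h ⊢
    have := hm hab
    simp only [Function.comp] at this
    simp only [Fin.sum_univ_two, Matrix.cons_val_zero, Matrix.cons_val_one] at h ⊢
    linarith

theorem equiv_of_rowCount {n : ℕ} {A B : (Fin 2 → Fin n) → Bool}
    (hA : IsThreshold A) (hB : IsThreshold B)
    (h : (Finset.univ : Finset (Fin n)).val.map (rowCount A)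
      = (Finset.univ : Finset (Fin n)).val.map (rowCount B)) : MatEquiv A B := by
  have hc : ∀ c, Nonempty ({a // rowCount B a = c} ≃ {b // rowCount A b = c}) := by
    intro c
    have hcc := congrArg (Multiset.count c) h
    rw [Multiset.count_map, Multiset.count_map] at hcc
    refine ⟨Fintype.equivOfCardEq ?_⟩
    rw [Fintype.card_subtype, Fintype.card_subtype]
    simp only [eq_comm (a := c)] at hcc
    exact hcc.symm
  have e := fun c => (hc c).some
  obtain ⟨σ, hσ⟩ : ∃ σ : Equiv.Perm (Fin n), ∀ i, rowCount A (σ i) = rowCount B i :=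
    ⟨Equiv.ofFiberEquiv (fun c => e c), Equiv.ofFiberEquiv_map _⟩
  obtain ⟨s, hs⟩ := threshold_sorted hA
  obtain ⟨t, ht⟩ := threshold_sorted hB
  refine ⟨1, ![σ, t.symm.trans s], fun α => ?_⟩
  have h1 : α = ![α 0, t (t.symm (α 1))] := by
    ext k; fin_cases k <;> simp
  have h2 : (fun j => (![σ, t.symm.trans s] : Fin 2 → Equiv.Perm (Fin n))
      ((1 : Equiv.Perm (Fin 2)).symm j) (α ((1 : Equiv.Perm (Fin 2)).symm j)))
      = ![σ (α 0), s (t.symm (α 1))] := by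
    ext k; fin_cases k <;> simp [Equiv.Perm.one_symm]
  rw [h2, Bool.eq_iff_iff, hs]
  conv_lhs => rw [h1]
  rw [ht, hσ]

/-- The number of equivalence classes of 2-dimensional threshold matrices of order n is at
most the central binomial coefficient C(2n, n). -/
theorem stmt_14 (n : ℕ) (hn : 1 ≤ n) :
    Nat.card (Quot (fun A B : {A : (Fin 2 → Fin n) → Bool // IsThreshold A} =>
      MatEquiv A.1 B.1)) ≤ Nat.choose (2 * n) n := by
  classical
  let f : Quot (fun A B : {A : (Fin 2 → Fin n) → Bool // IsThreshold A} =>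
      MatEquiv A.1 B.1) → Sym (Fin (n + 1)) n := fun q =>
    ⟨(Finset.univ : Finset (Fin n)).val.map (rowCount q.out.1), by simp⟩
  have hf : Function.Injective f := by
    intro a b hab
    rw [← Quot.out_eq a, ← Quot.out_eq b]
    apply Quot.sound
    exact equiv_of_rowCount a.out.2 b.out.2 (congrArg Subtype.val hab)
  have := Nat.card_le_card_of_injective f hf
  rw [Nat.card_eq_fintype_card (α := Sym (Fin (n + 1)) n), Sym.card_sym_eq_choose,
    Fintype.card_fin] at this
  rwa [show n + 1 + n - 1 = 2 * n by omega] at this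
end

section
/- For every n ≥ 1, the number of equivalence classes of 2-dimensional extremal (0,1)-matrices of order n equals ⌊(n+1)/2⌋. -/
open Finset

/-- `R × S` is an all-zero block of `A`. -/
def ZBlock {n : ℕ} (A : (Fin 2 → Fin n) → Bool) (R S : Finset (Fin n)) : Prop :=
  ∀ i ∈ R, ∀ j ∈ S, A ![i, j] = false

lemma vec2_eta {n : ℕ} (α : Fin 2 → Fin n) : ![α 0, α 1] = α := by
  ext i; fin_cases i <;> rfl

lemma hypSum_zero {n : ℕ} (k : (Fin 2 → Fin n) → ℝ) (i : Fin n) :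
    hypSum k 0 i = ∑ j, k ![i, j] := by
  unfold hypSum
  refine Finset.sum_bij' (fun α _ => α 1) (fun j _ => ![i, j]) ?_ ?_ ?_ ?_ ?_
  · simp
  · simp
  · intro α hα
    simp only [Finset.mem_filter, Finset.mem_univ, true_and] at hα
    rw [← hα]; exact vec2_eta α
  · simp
  · intro α hα
    simp only [Finset.mem_filter, Finset.mem_univ, true_and] at hα
    rw [← hα, vec2_eta α]

lemma hypSum_one {n : ℕ} (k : (Fin 2 → Fin n) → ℝ) (j : Fin n) :
    hypSum k 1 j = ∑ i, k ![i, j] := by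
  unfold hypSum
  refine Finset.sum_bij' (fun α _ => α 0) (fun i _ => ![i, j]) ?_ ?_ ?_ ?_ ?_
  · simp
  · simp
  · intro α hα
    simp only [Finset.mem_filter, Finset.mem_univ, true_and] at hα
    rw [← hα]; exact vec2_eta α
  · simp
  · intro α hα
    simp only [Finset.mem_filter, Finset.mem_univ, true_and] at hα
    rw [← hα, vec2_eta α]

lemma block_bound {n : ℕ} {A : (Fin 2 → Fin n) → Bool} (h : HasPolydiagonal A)
    {R S : Finset (Fin n)} (hB : ZBlock A R S) : R.card + S.card ≤ n := by
  obtain ⟨k, hk0, hkA, hk⟩ := h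
  have h1 : (R.card : ℝ) = ∑ i ∈ R, ∑ j ∈ Sᶜ, k ![i, j] := by
    have : ∀ i ∈ R, ∑ j ∈ Sᶜ, k ![i, j] = 1 := by
      intro i hi
      rw [← hk 0 i, hypSum_zero]
      apply Finset.sum_subset (Finset.subset_univ _)
      intro j _ hj
      exact hkA _ (hB i hi j (by simpa using hj))
    rw [Finset.sum_congr rfl this]; simp
  have h2 : ∑ i ∈ R, ∑ j ∈ Sᶜ, k ![i, j] ≤ (Sᶜ.card : ℝ) := by
    rw [Finset.sum_comm]
    have : ∀ j ∈ Sᶜ, ∑ i ∈ R, k ![i, j] ≤ 1 := by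
      intro j _
      rw [← hk 1 j, hypSum_one]
      exact Finset.sum_le_sum_of_subset_of_nonneg (Finset.subset_univ _) (fun _ _ _ => hk0 _)
    calc _ ≤ ∑ j ∈ Sᶜ, (1 : ℝ) := Finset.sum_le_sum this
      _ = _ := by simp
  have h3 : R.card ≤ Sᶜ.card := by exact_mod_cast h1.trans_le h2
  have h4 := Finset.card_add_card_compl S
  simp only [Fintype.card_fin] at h4
  omega

lemma hasPoly_of_blocks {n : ℕ} {A : (Fin 2 → Fin n) → Bool}
    (h : ∀ R S : Finset (Fin n), ZBlock A R S → R.card + S.card ≤ n) : HasPolydiagonal A := by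
  have hall := (Finset.all_card_le_biUnion_card_iff_exists_injective
    (fun i : Fin n => Finset.univ.filter (fun j => A ![i, j] = true))).1 (by
      intro R
      have := h R (R.biUnion (fun i : Fin n => Finset.univ.filter (fun j => A ![i, j] = true)))ᶜ (by
        intro i hi j hj
        simp only [Finset.mem_compl, Finset.mem_biUnion, Finset.mem_filter, Finset.mem_univ,
          true_and, not_exists, not_and] at hj
        simpa using hj i hi)
      have h4 := Finset.card_add_card_compl
        (R.biUnion (fun i : Fin n => Finset.univ.filter (fun j => A ![i, j] = true)))
      simp only [Fintype.card_fin] at h4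
      omega)
  obtain ⟨f, hf, hfA⟩ := hall
  have hfb : Function.Bijective f := Finite.injective_iff_bijective.1 hf
  refine ⟨fun α => if α 1 = f (α 0) then 1 else 0, ?_, ?_, ?_⟩
  · intro α; dsimp only; split_ifs <;> norm_num
  · intro α hα
    dsimp only
    rw [if_neg]
    intro h1
    have h2 := hfA (α 0)
    rw [← h1] at h2
    simp only [Finset.mem_filter, Finset.mem_univ, true_and] at h2
    rw [vec2_eta, hα] at h2
    cases h2
  · intro i j
    fin_cases i
    · change hypSum _ 0 j = 1
      rw [hypSum_zero]; simp
    · change hypSum _ 1 j = 1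
      rw [hypSum_one]
      obtain ⟨i, rfl⟩ := hfb.2 j
      simp [hf.eq_iff]

lemma extremal_iff {n : ℕ} (A : (Fin 2 → Fin n) → Bool) :
    IsExtremal A ↔ ∃ R S : Finset (Fin n), R.card + S.card = n + 1 ∧
      ∀ α, A α = false ↔ (α 0 ∈ R ∧ α 1 ∈ S) := by
  constructor
  · rintro ⟨h1, h2⟩
    have : ∃ R S : Finset (Fin n), ZBlock A R S ∧ n < R.card + S.card := by
      by_contra hc
      push Not at hc
      exact h1 (hasPoly_of_blocks hc)
    obtain ⟨R, S, hB, hc⟩ := this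
    have key : ∀ α, A α = false → ∀ R' S' : Finset (Fin n), R' ⊆ R → S' ⊆ S →
        ¬ (α 0 ∈ R' ∧ α 1 ∈ S') → R'.card + S'.card ≤ n := by
      intro α hα R' S' hR hS hn
      apply block_bound (h2 α hα)
      intro i hi j hj
      unfold addEntry
      rw [if_neg]
      · exact hB i (hR hi) j (hS hj)
      · rintro rfl
        exact hn ⟨hi, hj⟩
    refine ⟨R, S, ?_, ?_⟩
    · have hR := Finset.card_le_univ R
      have hS := Finset.card_le_univ S
      simp only [Fintype.card_fin] at hR hS
      obtain ⟨r, hr⟩ := Finset.card_pos.1 (show 0 < R.card by omega)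
      obtain ⟨s, hs⟩ := Finset.card_pos.1 (show 0 < S.card by omega)
      have := key ![r, s] (hB r hr s hs) (R.erase r) S (Finset.erase_subset _ _) subset_rfl
        (by simp)
      rw [Finset.card_erase_of_mem hr] at this
      omega
    · intro α
      constructor
      · intro hα
        by_contra hn
        have := key α hα R S subset_rfl subset_rfl hn
        omega
      · rintro ⟨h0, h1⟩
        rw [← vec2_eta α]
        exact hB _ h0 _ h1
  · rintro ⟨R, S, hc, hA⟩
    constructor
    · intro h
      have := block_bound h (R := R) (S := S) (fun i hi j hj => (hA _).2 ⟨hi, hj⟩)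
      omega
    · intro β hβ
      apply hasPoly_of_blocks
      intro R' S' hB
      by_contra hn
      have hR := Finset.card_le_univ R'
      have hS := Finset.card_le_univ S'
      simp only [Fintype.card_fin] at hR hS
      obtain ⟨r, hr⟩ := Finset.card_pos.1 (show 0 < R'.card by omega)
      obtain ⟨s, hs⟩ := Finset.card_pos.1 (show 0 < S'.card by omega)
      have hz : ∀ i ∈ R', ∀ j ∈ S', ![i, j] ≠ β ∧ i ∈ R ∧ j ∈ S := by
        intro i hi j hj
        have h1 := hB i hi j hj
        unfold addEntry at h1
        split_ifs at h1 with h2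
        exact ⟨h2, (hA _).1 h1⟩
      have hRR : R' ⊆ R := fun i hi => (hz i hi s hs).2.1
      have hSS : S' ⊆ S := fun j hj => (hz r hr j hj).2.2
      have c1 := Finset.card_le_card hRR
      have c2 := Finset.card_le_card hSS
      have e1 : R' = R := Finset.eq_of_subset_of_card_le hRR (by omega)
      have e2 : S' = S := Finset.eq_of_subset_of_card_le hSS (by omega)
      subst e1 e2
      have h3 := (hA β).1 hβ
      exact (hz _ h3.1 _ h3.2).1 (vec2_eta β)

/-- Number of zeros of a matrix. -/
def zeroCount {n : ℕ} (A : (Fin 2 → Fin n) → Bool) : ℕ :=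
  (Finset.univ.filter (fun α => A α = false)).card

lemma zeroCount_equiv {n : ℕ} {A B : (Fin 2 → Fin n) → Bool} (h : MatEquiv A B) :
    zeroCount A = zeroCount B := by
  obtain ⟨π, σ, h⟩ := h
  have hinj : Function.Injective (fun (α : Fin 2 → Fin n) =>
      (fun j => σ (π.symm j) (α (π.symm j)) : Fin 2 → Fin n)) := by
    intro α β hab
    ext i
    have := congrFun hab (π i)
    simp only [Equiv.symm_apply_apply, EmbeddingLike.apply_eq_iff_eq] at this
    rw [this]
  have hb := Finite.injective_iff_bijective.1 hinj
  symm
  refine Finset.card_equiv (Equiv.ofBijective _ hb) ?_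
  intro α
  simp [h α]

lemma zeroCount_block {n : ℕ} {A : (Fin 2 → Fin n) → Bool} {R S : Finset (Fin n)}
    (hA : ∀ α, A α = false ↔ (α 0 ∈ R ∧ α 1 ∈ S)) : zeroCount A = R.card * S.card := by
  rw [← Finset.card_product]
  refine Finset.card_equiv (finTwoArrowEquiv (Fin n)) ?_
  intro α
  simp [hA α]

/-- The initial segment of `Fin n` of length `r`. -/
def initSeg (n r : ℕ) : Finset (Fin n) := Finset.univ.filter (fun i => i.val < r)

lemma card_initSeg {n r : ℕ} (h : r ≤ n) : (initSeg n r).card = r := by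
  simp [initSeg, Fin.card_filter_val_lt, h]

/-- The canonical extremal matrix. -/
def canon (n m : ℕ) : (Fin 2 → Fin n) → Bool :=
  fun α => !(decide (α 0 ∈ initSeg n (m + 1)) && decide (α 1 ∈ initSeg n (n - m)))

lemma canon_spec (n m : ℕ) (α : Fin 2 → Fin n) :
    canon n m α = false ↔ (α 0 ∈ initSeg n (m + 1) ∧ α 1 ∈ initSeg n (n - m)) := by
  simp [canon]

lemma canon_extremal {n m : ℕ} (h : m < (n + 1) / 2) : IsExtremal (canon n m) := by
  rw [extremal_iff]
  refine ⟨_, _, ?_, canon_spec n m⟩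
  rw [card_initSeg (by omega), card_initSeg (by omega)]
  omega

lemma exists_perm {n : ℕ} (R T : Finset (Fin n)) (h : R.card = T.card) :
    ∃ σ : Equiv.Perm (Fin n), ∀ i, σ i ∈ T ↔ i ∈ R := by
  have e : {x // x ∈ R} ≃ {x // x ∈ T} := Fintype.equivOfCardEq (by simpa using h)
  refine ⟨e.extendSubtype, fun i => ⟨fun hi => ?_, fun hi => e.extendSubtype_mem i hi⟩⟩
  by_contra hc
  exact e.extendSubtype_not_mem i hc hi

lemma bool_eq_of {a b : Bool} (h : a = false ↔ b = false) : a = b := by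
  cases a <;> cases b <;> simp_all

lemma exists_canon {n : ℕ} {A : (Fin 2 → Fin n) → Bool} (hA : IsExtremal A) :
    ∃ m, m < (n + 1) / 2 ∧ MatEquiv (canon n m) A := by
  obtain ⟨R, S, hc, hA⟩ := (extremal_iff A).1 hA
  have hR := Finset.card_le_univ R
  have hS := Finset.card_le_univ S
  simp only [Fintype.card_fin] at hR hS
  rcases le_total R.card S.card with hle | hle
  · refine ⟨R.card - 1, by omega, ?_⟩
    obtain ⟨σ, hσ⟩ := exists_perm R (initSeg n (R.card - 1 + 1))
      (by rw [card_initSeg (by omega)]; omega)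
    obtain ⟨τ, hτ⟩ := exists_perm S (initSeg n (n - (R.card - 1)))
      (by rw [card_initSeg (by omega)]; omega)
    refine ⟨1, ![σ, τ], fun α => bool_eq_of ?_⟩
    rw [hA, canon_spec]
    have h0 : (1 : Equiv.Perm (Fin 2)).symm 0 = 0 := rfl
    have h1 : (1 : Equiv.Perm (Fin 2)).symm 1 = 1 := rfl
    simp only [h0, h1, Matrix.cons_val_zero, Matrix.cons_val_one, hσ, hτ]
  · refine ⟨S.card - 1, by omega, ?_⟩
    obtain ⟨σ, hσ⟩ := exists_perm S (initSeg n (S.card - 1 + 1))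
      (by rw [card_initSeg (by omega)]; omega)
    obtain ⟨τ, hτ⟩ := exists_perm R (initSeg n (n - (S.card - 1)))
      (by rw [card_initSeg (by omega)]; omega)
    refine ⟨Equiv.swap 0 1, ![τ, σ], fun α => bool_eq_of ?_⟩
    rw [hA, canon_spec]
    have h0 : (Equiv.swap (0 : Fin 2) 1).symm 0 = 1 := by decide
    have h1 : (Equiv.swap (0 : Fin 2) 1).symm 1 = 0 := by decide
    simp only [h0, h1, Matrix.cons_val_zero, Matrix.cons_val_one, hσ, hτ]
    exact and_comm

lemma zeroCount_canon {n m : ℕ} (h : m < (n + 1) / 2) :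
    zeroCount (canon n m) = (m + 1) * (n - m) := by
  rw [zeroCount_block (canon_spec n m), card_initSeg (by omega), card_initSeg (by omega)]

lemma canon_count_inj {n a b : ℕ} (ha : a < (n + 1) / 2) (hb : b < (n + 1) / 2)
    (h : (a + 1) * (n - a) = (b + 1) * (n - b)) : a = b := by
  obtain ⟨c, hc⟩ : ∃ c, n = a + c := ⟨n - a, by omega⟩
  obtain ⟨d, hd⟩ : ∃ d, n = b + d := ⟨n - b, by omega⟩
  have e1 : n - a = c := by omega
  have e2 : n - b = d := by omega
  rw [e1, e2] at h
  have h3 : (a : ℤ) + c = b + d := by omega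
  have h4 : ((a : ℤ) + 1) * c = (b + 1) * d := by exact_mod_cast h
  have h5 : ((a : ℤ) - b) * (d - a - 1) = 0 := by
    have : (c : ℤ) = b + d - a := by omega
    rw [this] at h4
    linarith
  rcases mul_eq_zero.1 h5 with h6 | h6 <;> omega

/-- The number of equivalence classes of 2-dimensional extremal matrices of order n equals
⌊(n+1)/2⌋. -/
theorem stmt_15 (n : ℕ) (hn : 1 ≤ n) :
    Nat.card (Quot (fun A B : {A : (Fin 2 → Fin n) → Bool // IsExtremal A} =>
      MatEquiv A.1 B.1)) = (n + 1) / 2 := by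
  let r := fun A B : {A : (Fin 2 → Fin n) → Bool // IsExtremal A} => MatEquiv A.1 B.1
  let F : Fin ((n + 1) / 2) → Quot r := fun m => Quot.mk r ⟨canon n m, canon_extremal m.2⟩
  have hF : Function.Bijective F := by
    constructor
    · intro a b hab
      have h := congrArg (Quot.lift (fun A => zeroCount A.1)
        (fun A B (h : r A B) => zeroCount_equiv h)) hab
      change zeroCount (canon n a) = zeroCount (canon n b) at h
      rw [zeroCount_canon a.2, zeroCount_canon b.2] at h
      exact Fin.ext (canon_count_inj a.2 b.2 h)
    · intro q
      induction q using Quot.ind with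
      | mk A =>
        obtain ⟨m, hm, he⟩ := exists_canon A.2
        exact ⟨⟨m, hm⟩, Quot.sound he⟩
  have := Nat.card_congr (Equiv.ofBijective F hF)
  rw [Nat.card_fin] at this
  exact this.symm
end

section
/- Let d ≥ 1 and λ > 0, and let Λ be the constant essential-weight tuple (λ, λ, …, λ) of length d. Then the d×2 table corresponding to Λ is an optimal hyperplane cover of the d-dimensional matrix A(Λ) of order 2 and A(Λ) is extremal if and only if d is odd and λ = 2/(d+1). -/
open Finset

/-- number of zeros -/
def zc {d : ℕ} (α : Fin d → Fin 2) : ℕ := (Finset.univ.filter (fun i => α i = 0)).card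

/-- the antipodal index -/
def compl2 {d : ℕ} (α : Fin d → Fin 2) : Fin d → Fin 2 := fun i => if α i = 0 then 1 else 0

lemma zc_compl {d : ℕ} (α : Fin d → Fin 2) : zc α + zc (compl2 α) = d := by
  have h := Finset.card_filter_add_card_filter_not (s := (Finset.univ : Finset (Fin d))) (fun i => α i = 0)
  have e : (Finset.univ.filter (fun i => compl2 α i = 0)) = Finset.univ.filter (fun i => ¬ α i = 0) := by
    ext i
    by_cases h : α i = 0 <;> simp [compl2, h]
  unfold zc
  rw [e, h]
  simp

lemma sum_zc {d : ℕ} (α : Fin d → Fin 2) (lam : ℝ) :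
    (∑ i, (if α i = 0 then lam else 0)) = zc α * lam := by
  rw [← Finset.sum_filter, Finset.sum_const, nsmul_eq_mul, zc]

lemma exists_zc {d c : ℕ} (h : c ≤ d) : ∃ α : Fin d → Fin 2, zc α = c := by
  refine ⟨fun i => if i.val < c then 0 else 1, ?_⟩
  have e : (Finset.univ.filter (fun i : Fin d => (if i.val < c then (0 : Fin 2) else 1) = 0))
      = Finset.univ.filter (fun i : Fin d => i.val < c) := by
    ext i
    by_cases h : i.val < c <;> simp [h]
  unfold zc
  rw [e, Fin.card_filter_val_lt]
  omega

lemma polydiag_pair {d : ℕ} (A : (Fin d → Fin 2) → Bool) (β : Fin d → Fin 2)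
    (h1 : A β = true) (h2 : A (compl2 β) = true) : HasPolydiagonal A := by
  refine ⟨fun γ => (if γ = β then 1 else 0) + (if γ = compl2 β then 1 else 0), ?_, ?_, ?_⟩
  · intro α
    positivity
  · intro α hα
    have e1 : α ≠ β := by rintro rfl; simp [h1] at hα
    have e2 : α ≠ compl2 β := by rintro rfl; simp [h2] at hα
    simp [e1, e2]
  · intro i j
    unfold hypSum
    rw [Finset.sum_add_distrib, Finset.sum_ite_eq', Finset.sum_ite_eq']
    simp only [Finset.mem_filter, Finset.mem_univ, true_and, compl2]
    generalize β i = b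
    fin_cases b <;> fin_cases j <;> simp

lemma polydiag_total {d : ℕ} (hd : 1 ≤ d) (k : (Fin d → Fin 2) → ℝ)
    (hk : ∀ i j, hypSum k i j = 1) : ∑ α, k α = 2 := by
  have h0 := hk ⟨0, hd⟩ 0
  have h1 := hk ⟨0, hd⟩ 1
  have e : ∑ α, k α = hypSum k ⟨0, hd⟩ 0 + hypSum k ⟨0, hd⟩ 1 := by
    unfold hypSum
    rw [← Finset.sum_filter_add_sum_filter_not Finset.univ (fun α : Fin d → Fin 2 => α ⟨0, hd⟩ = 0)]
    congr 2
    ext α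
    simp only [Finset.mem_filter, Finset.mem_univ, true_and]
    omega
  rw [e, h0, h1]
  norm_num

lemma polydiag_zc {d : ℕ} (k : (Fin d → Fin 2) → ℝ)
    (hk : ∀ i j, hypSum k i j = 1) : ∑ α, k α * zc α = d := by
  have : ∀ α : Fin d → Fin 2, k α * zc α = ∑ i, if α i = 0 then k α else 0 := by
    intro α
    rw [sum_zc, mul_comm]
  simp_rw [this]
  rw [Finset.sum_comm]
  have : ∀ i : Fin d, (∑ α : Fin d → Fin 2, if α i = 0 then k α else 0) = 1 := by
    intro i
    rw [← hk i 0, hypSum, Finset.sum_filter]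
  simp [this]

lemma cover_bound {d m : ℕ} (hd : 1 ≤ d) (hm : m ≤ d) (hm2 : d ≤ 2 * m) (Λ : Fin d → Fin 2 → ℝ)
    (h0 : ∀ i j, 0 ≤ Λ i j)
    (h : ∀ α : Fin d → Fin 2, zc α = m → 1 ≤ ∑ i, Λ i (α i)) :
    (d : ℝ) ≤ m * coverWeight Λ := by
  have : NeZero d := ⟨by omega⟩
  obtain ⟨α, hα⟩ := exists_zc hm
  have hs : ∀ s : Fin d, zc (fun i => α (i + s)) = m := by
    intro s
    rw [← hα]
    unfold zc
    apply Finset.card_bij (fun i _ => i + s)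
    · intro i hi; simpa using hi
    · intro i _ j _ hij; simpa using hij
    · intro i hi; exact ⟨i - s, by simpa using hi, by simp⟩
  have h1 : (d : ℝ) ≤ ∑ s : Fin d, ∑ i, Λ i (α (i + s)) := by
    calc (d : ℝ) = ∑ s : Fin d, (1 : ℝ) := by simp
      _ ≤ _ := Finset.sum_le_sum (fun s _ => h _ (hs s))
  rw [Finset.sum_comm] at h1
  refine h1.trans ?_
  unfold coverWeight
  rw [Finset.mul_sum]
  apply Finset.sum_le_sum
  intro i _
  have e : ∑ s : Fin d, Λ i (α (i + s)) = ∑ t, Λ i (α t) :=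
    Equiv.sum_comp (Equiv.addLeft i) (fun t => Λ i (α t))
  rw [e]
  have e2 : ∀ t, Λ i (α t) = (if α t = 0 then Λ i 0 else 0) + (if compl2 α t = 0 then Λ i 1 else 0) := by
    intro t
    unfold compl2
    generalize α t = b
    fin_cases b <;> simp
  simp_rw [e2]
  rw [Finset.sum_add_distrib, sum_zc, sum_zc, Fin.sum_univ_two, hα, mul_add]
  have := zc_compl α
  have : (zc (compl2 α) : ℝ) ≤ m := by exact_mod_cast (by omega)
  nlinarith [h0 i 1]

lemma coverWeight_const {d : ℕ} (lam : ℝ) :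
    coverWeight (fun (_ : Fin d) (j : Fin 2) => if j = 0 then lam else 0) = d * lam := by
  simp [coverWeight]

theorem stmt_16 {d : ℕ} (hd : 1 ≤ d) (lam : ℝ) (hlam : 0 < lam)
    (A : (Fin d → Fin 2) → Bool)
    (hA : ∀ α, A α = true ↔ 1 ≤ ∑ i, (if α i = 0 then lam else 0)) :
    (IsOptimalCover A (fun i j => if j = 0 then lam else 0) ∧ IsExtremal A) ↔
      (Odd d ∧ lam = 2 / ((d : ℝ) + 1)) := by
  simp_rw [sum_zc] at hA
  have hdR : (0 : ℝ) < d := by exact_mod_cast hd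
  constructor
  · rintro ⟨⟨_, hopt⟩, hno, hadd⟩
    rw [coverWeight_const] at hopt
    obtain ⟨m, hm, hmmin⟩ : ∃ m : ℕ, 1 ≤ m * lam ∧ ∀ c : ℕ, 1 ≤ c * lam → m ≤ c := by
      classical
      have hex : ∃ m : ℕ, 1 ≤ m * lam := by
        obtain ⟨m, hm⟩ := exists_nat_ge (1 / lam)
        exact ⟨m, by rwa [div_le_iff₀ hlam] at hm⟩
      exact ⟨Nat.find hex, Nat.find_spec hex, fun c hc => Nat.find_min' hex hc⟩
    have hm0 : 1 ≤ m := by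
      rcases Nat.eq_zero_or_pos m with h | h
      · subst h; norm_num at hm
      · exact h
    have hmR : (0 : ℝ) < m := by exact_mod_cast hm0
    have hAm : ∀ α, A α = true ↔ m ≤ zc α := by
      intro α
      rw [hA]
      refine ⟨hmmin _, fun h => hm.trans ?_⟩
      have : (m : ℝ) ≤ zc α := by exact_mod_cast h
      gcongr
    have hzle : ∀ α : Fin d → Fin 2, zc α ≤ d := fun α => by
      have := zc_compl α; omega
    have hmd : m ≤ d := by
      by_contra hc
      have := hopt (fun _ _ => 0) ⟨fun _ _ => le_refl _, fun α hα => by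
        have := (hAm α).1 hα
        have := hzle α
        omega⟩
      simp only [coverWeight, Finset.sum_const_zero] at this
      nlinarith [mul_pos hdR hlam]
    have hle : lam ≤ 1 / m := by
      have := hopt (fun _ j => if j = 0 then 1 / (m : ℝ) else 0) ⟨fun _ _ => by positivity, fun α hα => by
        have h1 := (hAm α).1 hα
        have h2 : (m : ℝ) ≤ zc α := by exact_mod_cast h1
        show (1 : ℝ) ≤ ∑ i, if α i = 0 then 1 / (m : ℝ) else 0
        rw [sum_zc, mul_one_div, le_div_iff₀ hmR]
        linarith⟩
      rw [coverWeight_const] at this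
      exact le_of_mul_le_mul_left this hdR
    have hlm : lam = 1 / m := by
      apply le_antisymm hle
      rw [div_le_iff₀ hmR]
      linarith
    have h1 : d < 2 * m := by
      by_contra hc
      obtain ⟨α, hα⟩ := exists_zc hmd
      have := zc_compl α
      exact hno (polydiag_pair A α ((hAm _).2 (by omega)) ((hAm _).2 (by omega)))
    have h2 : 2 * m ≤ d + 1 := by
      obtain ⟨β, hβ⟩ := exists_zc (show m - 1 ≤ d by omega)
      have hβA : A β = false := by
        rw [← Bool.not_eq_true, hAm]; omega
      obtain ⟨k, hk0, hks, hk⟩ := hadd β hβA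
      have ht := polydiag_total hd k hk
      have hz := polydiag_zc k hk
      have hkβ : k β ≤ 1 := by
        rw [← hk ⟨0, hd⟩ (β ⟨0, hd⟩), hypSum]
        exact Finset.single_le_sum (f := k) (fun a _ => hk0 a) (by simp)
      have key : ∑ α, (k α * m - (if α = β then k α else 0)) ≤ ∑ α, k α * zc α := by
        apply Finset.sum_le_sum
        intro α _
        by_cases h : α = β
        · subst h
          have : (m : ℝ) = zc α + 1 := by exact_mod_cast (by omega)
          rw [this]; simp; linarith
        · simp only [h, if_false, sub_zero]
          by_cases hα : A α = true
          · have : (m : ℝ) ≤ zc α := by exact_mod_cast (hAm α).1 hα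
            exact mul_le_mul_of_nonneg_left this (hk0 α)
          · have : k α = 0 := hks α (by simpa [addEntry, h] using hα)
            simp [this]
      rw [Finset.sum_sub_distrib, ← Finset.sum_mul, ht, hz] at key
      simp only [Finset.sum_ite_eq', Finset.mem_univ, if_true] at key
      have : (2 * m : ℝ) ≤ d + 1 := by linarith
      exact_mod_cast this
    have h3 : d + 1 = 2 * m := by omega
    refine ⟨⟨m - 1, by omega⟩, ?_⟩
    have : (d : ℝ) + 1 = 2 * m := by exact_mod_cast h3
    rw [this, hlm]
    field_simp
  · rintro ⟨⟨r, hr⟩, hl⟩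
    obtain ⟨m, hm⟩ : ∃ m, m = r + 1 := ⟨_, rfl⟩
    have h3 : d + 1 = 2 * m := by omega
    have h3R : (d : ℝ) + 1 = 2 * m := by exact_mod_cast h3
    have hmR : (0 : ℝ) < m := by exact_mod_cast (by omega)
    have hlm : lam = 1 / m := by
      rw [hl, h3R]; field_simp
    have hAm : ∀ α, A α = true ↔ m ≤ zc α := by
      intro α
      rw [hA, hlm, mul_one_div, le_div_iff₀ hmR, one_mul, Nat.cast_le]
    refine ⟨⟨⟨fun i j => by positivity, fun α hα => ?_⟩, fun Λ' hΛ => ?_⟩, ?_, fun β hβ => ?_⟩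
    · show (1 : ℝ) ≤ ∑ i, if α i = 0 then lam else 0
      rw [sum_zc]
      exact (hA α).1 hα
    · rw [coverWeight_const, hlm, mul_one_div, div_le_iff₀ hmR, mul_comm]
      exact cover_bound hd (by omega) (by omega) Λ' hΛ.1
        (fun α hα => hΛ.2 α ((hAm α).2 hα.ge))
    · rintro ⟨k, hk0, hks, hk⟩
      have ht := polydiag_total hd k hk
      have hz := polydiag_zc k hk
      have key : ∑ α, k α * m ≤ ∑ α, k α * zc α := by
        apply Finset.sum_le_sum
        intro α _
        by_cases hα : A α = true
        · have : (m : ℝ) ≤ zc α := by exact_mod_cast (hAm α).1 hα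
          exact mul_le_mul_of_nonneg_left this (hk0 α)
        · have : k α = 0 := hks α (by simpa using hα)
          simp [this]
      rw [← Finset.sum_mul, ht, hz] at key
      linarith
    · have hlt : ¬ m ≤ zc β := by rw [← hAm, hβ]; simp
      have hc := zc_compl β
      apply polydiag_pair _ β
      · simp [addEntry]
      · have : A (compl2 β) = true := (hAm _).2 (by omega)
        simp [addEntry, this]
end
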